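/- arXiv:math/0103129 — 4 statements merged into one kernel-verified Lean document; each statement's English description precedes it below -/
import Mathlib

section
/- Let (D ⊆ A, E) be a D-valued probability space and let a ∈ A be R-diagonal with amalgamation over D. Then for every scalar random variable u ∈ A which is unitary and such that {a, a*} and {u, u*} are free with amalgamation over D, the elements a and ua are identically D-distributed. -/
/-!
Write `u·a` words over `D` as words in `a`, `star a`, `u`, `star u`: since `u` is unitary and commutes
with `D`, a letter `u` survives exactly between two consecutive letters `a`, a letter `star u`
exactly between two consecutive letters `star a`, and possibly one at either end. Consider the
pairs `(x₁ x₂ ⋯ xₖ, g₀ x₁ g₁ x₂ ⋯ xₖ gₖ)` with `x_r ∈ P_{i_r i_{r+1}}` and the `g_r` the powers of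
`u` dictated by the indices (`ChainPair`). Together with the diagonal pairs `(d, d)`, `d ∈ D`, they
span a subspace of `A × A` stable under left multiplication by `(d, d)`, `(a, u * a)` and
`(star a, star (u * a))` (`pairSpan_letter_mul`): the only new phenomenon is that `a x₁` may fail to
be centred, and then its expectation, an element of `D`, lets the neighbouring `u` and `star u`
cancel. Hence each pair (word in `a`, same word in `u * a`) lies in this subspace.

It remains to see that `E` vanishes on both entries of a chain pair. For the first this is
`R`-diagonality (`Composable.cond_eq_zero`). For the second, write each `g_r` as its centred part
plus a scalar and expand; products of consecutive `x_r` are still centred by `R`-diagonality, so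
every term is an alternating product of centred elements, killed by freeness
(`ChainPair.mul_mem_span_alternating`).
-/

noncomputable section

variable {A : Type*}

section Scaffold
variable [Ring A] [Algebra ℂ A] [StarRing A] [StarModule ℂ A]

/-- A faithful tracial state on a unital complex `⋆`-algebra. -/
structure IsFaithfulTracialState (φ : A →ₗ[ℂ] ℂ) : Prop where
  unital : φ 1 = 1
  positive : ∀ a : A, 0 ≤ (φ (star a * a)).re ∧ (φ (star a * a)).im = 0
  tracial : ∀ a b : A, φ (a * b) = φ (b * a)
  faithful : ∀ a : A, φ (star a * a) = 0 → a = 0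

/-- `E` is a conditional expectation onto the subalgebra with underlying set `D`. -/
def IsCondExp (D : Set A) (E : A →ₗ[ℂ] A) : Prop :=
  E 1 = 1 ∧ (∀ x : A, E x ∈ D) ∧
    ∀ d₁ ∈ D, ∀ d₂ ∈ D, ∀ x : A, E (d₁ * x * d₂) = d₁ * E x * d₂

/-- `letter a true = a`, `letter a false = star a`. -/
def letter (a : A) : Bool → A := fun b => if b then a else star a

/-- Words `d₀ · a^{s₁} · d₁ · a^{s₂} · ⋯ · a^{sₖ} · dₖ` with the `dᵢ` running over `D`
and the pattern of letters (`true` for `a`, `false` for `star a`) given by the list. -/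
def wordSet (D : Set A) (a : A) : List Bool → Set A
  | [] => D
  | b :: rest => {x | ∃ d ∈ D, ∃ w ∈ wordSet D a rest, x = d * letter a b * w}

/-- The alternating list of length `n` starting with `b`. -/
def altList : Bool → ℕ → List Bool
  | _, 0 => []
  | b, n + 1 => b :: altList (!b) n

/-- The sets `P₁₁, P₁₂, P₂₁, P₂₂` associated to `a` (indices `0,1` standing for `1,2`). -/
def Pset (D : Set A) (E : A →ₗ[ℂ] A) (a : A) : Fin 2 → Fin 2 → Set A :=
  ![![↑(Submodule.span ℂ (⋃ m : ℕ, wordSet D a (altList false (2 * m + 1)))),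
     {x | x ∈ Submodule.span ℂ (⋃ m : ℕ, wordSet D a (altList false (2 * m))) ∧ E x = 0}],
    ![{x | x ∈ Submodule.span ℂ (⋃ m : ℕ, wordSet D a (altList true (2 * m))) ∧ E x = 0},
     ↑(Submodule.span ℂ (⋃ m : ℕ, wordSet D a (altList true (2 * m + 1))))]]

/-- `a` is `R`-diagonal with amalgamation over `D` (w.r.t. the conditional expectation `E`). -/
def RDiagWithAmalg (D : Set A) (E : A →ₗ[ℂ] A) (a : A) : Prop :=
  ∀ n : ℕ, 0 < n → ∀ (i : Fin (n + 1) → Fin 2) (x : Fin n → A),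
    (∀ k : Fin n, x k ∈ Pset D E a (i k.castSucc) (i k.succ)) →
    E (List.ofFn x).prod = 0

/-- `x` and `y` are identically `D`-distributed:
`E(x^{s₁} d₁ x^{s₂} d₂ ⋯ d_{n−1} x^{sₙ}) = E(y^{s₁} d₁ ⋯ d_{n−1} y^{sₙ})`. -/
def IdentDistrib (D : Set A) (E : A →ₗ[ℂ] A) (x y : A) : Prop :=
  ∀ n : ℕ, 0 < n → ∀ (s : Fin n → Bool) (d : Fin n → A), (∀ i, d i ∈ D) →
    E (List.ofFn fun i : Fin n =>
        letter x (s i) * (if i.val + 1 < n then d i else 1)).prod =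
    E (List.ofFn fun i : Fin n =>
        letter y (s i) * (if i.val + 1 < n then d i else 1)).prod

/-- A family of subsets of `A` is free with amalgamation over `D`. -/
def FreeAmalg (D : Set A) (E : A →ₗ[ℂ] A) {ι : Type*} (X : ι → Set A) : Prop :=
  ∀ n : ℕ, 0 < n → ∀ (s : Fin n → ι) (x : Fin n → A),
    (∀ k : Fin n, x k ∈ Algebra.adjoin ℂ (X (s k) ∪ D)) →
    (∀ (k : Fin n) (h : k.val + 1 < n), s k ≠ s ⟨k.val + 1, h⟩) →
    (∀ k : Fin n, E (x k) = 0) →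
    E (List.ofFn x).prod = 0

/-- A scalar random variable: normal, commutes with `D`, with scalar `D`-moments. -/
def IsScalarRV (D : Set A) (E : A →ₗ[ℂ] A) (y : A) : Prop :=
  y * star y = star y * y ∧
  (∀ d ∈ D, d * y = y * d ∧ d * star y = star y * d) ∧
  ∀ k l : ℕ, ∃ c : ℂ, E (y ^ k * (star y) ^ l) = algebraMap ℂ A c

end Scaffold

/-- The scalars `ℂ·1` inside `A`. -/
def scalarD (A : Type*) [Ring A] [Algebra ℂ A] : Set A := Set.range (algebraMap ℂ A)

section Scaffold2
variable [Ring A] [Algebra ℂ A] [StarRing A] [StarModule ℂ A]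

/-- The conditional expectation `x ↦ φ(x)·1` associated to a state `φ`. -/
def scalarE (φ : A →ₗ[ℂ] ℂ) : A →ₗ[ℂ] A := (Algebra.linearMap ℂ A).comp φ

/-- `a` is (scalar) `R`-diagonal with respect to `φ`. -/
def RDiag (φ : A →ₗ[ℂ] ℂ) (a : A) : Prop :=
  RDiagWithAmalg (scalarD A) (scalarE φ) a

/-- A family of subsets of `A` is free with respect to the state `φ`. -/
def FreeScalar (φ : A →ₗ[ℂ] ℂ) {ι : Type*} (X : ι → Set A) : Prop :=
  FreeAmalg (scalarD A) (scalarE φ) X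

/-- `a^1 = a`, `a^{-1} = star a`. -/
def sgnPow (a : A) (t : ℤ) : A := if t = 1 then a else star a

/-- The set of balanced words in `a, star a`. -/
def balancedWords (a : A) : Set A :=
  {w | ∃ (n : ℕ) (_ : 0 < n) (t : Fin n → ℤ),
    (∀ i, t i = 1 ∨ t i = -1) ∧
    (∑ i, t i) = 0 ∧
    (∀ j : ℕ, 0 < j → j < n →
      (∑ i ∈ Finset.univ.filter (fun i : Fin n => i.val < j), t i) ≤ 0) ∧
    w = (List.ofFn fun i : Fin n => sgnPow a (t i)).prod}

/-- The algebra `K_a`: the span of balanced words. -/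
def Kset (a : A) : Set A := ↑(Submodule.span ℂ (balancedWords a))

end Scaffold2

end
section Proof

set_option linter.unusedSectionVars false

variable {A : Type*} [Ring A] [Algebra ℂ A] [StarRing A] [StarModule ℂ A]

/-! ### The spaces of alternating words -/

/-- The index of `Pset` attached to a letter: `a` is `1`, `star a` is `0`. -/
def letterIdx (b : Bool) : Fin 2 := if b then 1 else 0

/-- `Pset` indexed by letters: `PB b c` consists of combinations of alternating words that
start with the letter `b` and end with the letter `c`, centred when `b ≠ c`. -/
def PB (D : StarSubalgebra ℂ A) (E : A →ₗ[ℂ] A) (a : A) (b c : Bool) : Set A :=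
  Pset (D : Set A) E a (letterIdx b) (letterIdx c)

/-- The span of the alternating words that start with the letter `b` and have length congruent to
`e` modulo `2` (and at least `e`); no centring. -/
def altSpan (D : StarSubalgebra ℂ A) (a : A) (b : Bool) (e : ℕ) : Submodule ℂ A :=
  Submodule.span ℂ (⋃ m : ℕ, wordSet (D : Set A) a (altList b (2 * m + e)))

variable {D : StarSubalgebra ℂ A} {E : A →ₗ[ℂ] A} {a u : A}

lemma mem_PB_self {b : Bool} {x : A} : x ∈ PB D E a b b ↔ x ∈ altSpan D a b 1 := by
  cases b <;> simp [PB, letterIdx, Pset, altSpan]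

lemma mem_PB_not {b : Bool} {x : A} :
    x ∈ PB D E a b (!b) ↔ x ∈ altSpan D a b 0 ∧ E x = 0 := by
  cases b <;> simp [PB, letterIdx, Pset, altSpan]

lemma cond_left_mul (hE : IsCondExp (D : Set A) E) {d : A} (hd : d ∈ D) (x : A) :
    E (d * x) = d * E x := by
  simpa using hE.2.2 d hd 1 (one_mem D) x

lemma cond_of_mem (hE : IsCondExp (D : Set A) E) {d : A} (hd : d ∈ D) : E d = d := by
  simpa [hE.1] using cond_left_mul hE hd 1

lemma left_mul_mem_wordSet {d : A} (hd : d ∈ D) :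
    ∀ {l : List Bool} {x : A}, x ∈ wordSet (D : Set A) a l → d * x ∈ wordSet (D : Set A) a l
  | [], _, hx => mul_mem hd hx
  | _ :: _, _, ⟨d', hd', w, hw, h⟩ => ⟨d * d', mul_mem hd hd', w, hw, by rw [h]; noncomm_ring⟩

lemma left_mul_mem_altSpan {d : A} (hd : d ∈ D) {b : Bool} {e : ℕ} {x : A}
    (hx : x ∈ altSpan D a b e) : d * x ∈ altSpan D a b e := by
  induction hx using Submodule.span_induction with
  | mem x hx =>
    obtain ⟨m, hm⟩ := Set.mem_iUnion.1 hx
    exact Submodule.subset_span (Set.mem_iUnion.2 ⟨m, left_mul_mem_wordSet hd hm⟩)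
  | zero => simp
  | add x y _ _ hx hy => rw [mul_add]; exact add_mem hx hy
  | smul c x _ hx => rw [mul_smul_comm]; exact Submodule.smul_mem _ _ hx

lemma letter_mul_mem_wordSet {b : Bool} {n : ℕ} {x : A}
    (hx : x ∈ wordSet (D : Set A) a (altList (!b) n)) :
    letter a b * x ∈ wordSet (D : Set A) a (altList b (n + 1)) :=
  ⟨1, one_mem D, x, hx, by rw [one_mul]⟩

/-- Left multiplication by a letter different from the first one; `m` absorbs a possible increase
of the number of letter pairs. -/
lemma letter_mul_mem_altSpan {b : Bool} {e e' m : ℕ} (he : e + 1 = 2 * m + e') {x : A}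
    (hx : x ∈ altSpan D a (!b) e) : letter a b * x ∈ altSpan D a b e' := by
  induction hx using Submodule.span_induction with
  | mem x hx =>
    obtain ⟨k, hk⟩ := Set.mem_iUnion.1 hx
    refine Submodule.subset_span (Set.mem_iUnion.2 ⟨k + m, ?_⟩)
    have := letter_mul_mem_wordSet hk
    rwa [show 2 * (k + m) + e' = 2 * k + e + 1 by omega]
  | zero => simp
  | add x y _ _ hx hy => rw [mul_add]; exact add_mem hx hy
  | smul c x _ hx => rw [mul_smul_comm]; exact Submodule.smul_mem _ _ hx

lemma mem_altSpan_zero {b : Bool} {d : A} (hd : d ∈ D) : d ∈ altSpan D a b 0 :=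
  Submodule.subset_span (Set.mem_iUnion.2 ⟨0, hd⟩)

lemma left_mul_mem_PB (hE : IsCondExp (D : Set A) E) {d : A} (hd : d ∈ D) {b c : Bool} {x : A}
    (hx : x ∈ PB D E a b c) : d * x ∈ PB D E a b c := by
  obtain rfl | rfl := Bool.eq_or_eq_not c b
  · rw [mem_PB_self] at hx ⊢
    exact left_mul_mem_altSpan hd hx
  · simp only [mem_PB_not] at hx ⊢
    exact ⟨left_mul_mem_altSpan hd hx.1, by rw [cond_left_mul hE hd, hx.2, mul_zero]⟩

lemma letter_mul_mem_PB_of_mem {b : Bool} {d : A} (hd : d ∈ D) :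
    letter a b * d ∈ PB D E a b b :=
  mem_PB_self.2 (letter_mul_mem_altSpan (m := 0) rfl (mem_altSpan_zero hd))

lemma letter_mem_adjoin (b : Bool) (X : Set A) :
    letter a b ∈ Algebra.adjoin ℂ (({a, star a} : Set A) ∪ X) := by
  apply Algebra.subset_adjoin
  cases b <;> simp [letter]

lemma wordSet_subset_adjoin :
    ∀ (l : List Bool) {x : A}, x ∈ wordSet (D : Set A) a l →
      x ∈ Algebra.adjoin ℂ (({a, star a} : Set A) ∪ (D : Set A))
  | [], _, hx => Algebra.subset_adjoin (Or.inr hx)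
  | b :: l, _, ⟨_, hd, _, hw, h⟩ => by
    rw [h]
    exact mul_mem (mul_mem (Algebra.subset_adjoin (Or.inr hd)) (letter_mem_adjoin b _))
      (wordSet_subset_adjoin l hw)

lemma altSpan_subset_adjoin {b : Bool} {e : ℕ} {x : A} (hx : x ∈ altSpan D a b e) :
    x ∈ Algebra.adjoin ℂ (({a, star a} : Set A) ∪ (D : Set A)) := by
  have : altSpan D a b e ≤
      (Algebra.adjoin ℂ (({a, star a} : Set A) ∪ (D : Set A))).toSubmodule :=
    Submodule.span_le.2 <| Set.iUnion_subset fun _ _ h => wordSet_subset_adjoin _ h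
  exact this hx

lemma PB_subset_adjoin {b c : Bool} {x : A} (hx : x ∈ PB D E a b c) :
    x ∈ Algebra.adjoin ℂ (({a, star a} : Set A) ∪ (D : Set A)) := by
  obtain rfl | rfl := Bool.eq_or_eq_not c b
  · exact altSpan_subset_adjoin (mem_PB_self.1 hx)
  · exact altSpan_subset_adjoin (mem_PB_not.1 hx).1

/-! ### Products centred by `R`-diagonality and by freeness -/

/-- `Composable D E a n c x`: `x` is a (possibly empty) product `x₁ ⋯ xₙ` with
`x_r ∈ PB i_r i_{r+1}` and last index `i_{n+1} = c`. -/
inductive Composable (D : StarSubalgebra ℂ A) (E : A →ₗ[ℂ] A) (a : A) : ℕ → Bool → A → Prop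
  | nil (c : Bool) : Composable D E a 0 c 1
  | snoc {n : ℕ} {b c : Bool} {z x : A} : Composable D E a n b z → x ∈ PB D E a b c →
      Composable D E a (n + 1) c (z * x)

lemma Composable.exists_ofFn {n : ℕ} {c : Bool} {z : A} (h : Composable D E a n c z) :
    ∃ (i : Fin (n + 1) → Fin 2) (x : Fin n → A), i (Fin.last n) = letterIdx c ∧
      (∀ k : Fin n, x k ∈ Pset (D : Set A) E a (i k.castSucc) (i k.succ)) ∧
      (List.ofFn x).prod = z := by
  induction h with
  | nil c => exact ⟨fun _ => letterIdx c, Fin.elim0, rfl, fun k => k.elim0, by simp⟩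
  | @snoc n b c z x _ hx ih =>
    obtain ⟨i, y, hi, hy, hp⟩ := ih
    refine ⟨Fin.snoc i (letterIdx c), Fin.snoc y x, by simp, fun k => ?_, ?_⟩
    · refine Fin.lastCases ?_ (fun k => ?_) k
      · rw [Fin.snoc_last, Fin.snoc_castSucc, Fin.succ_last, Fin.snoc_last, hi]
        exact hx
      · rw [Fin.snoc_castSucc, Fin.snoc_castSucc, Fin.succ_castSucc, Fin.snoc_castSucc]
        exact hy k
    · rw [List.ofFn_succ']
      simp [hp]

lemma Composable.cond_eq_zero (ha : RDiagWithAmalg (D : Set A) E a) {n : ℕ} {c : Bool} {z : A}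
    (h : Composable D E a (n + 1) c z) : E z = 0 := by
  obtain ⟨i, x, _, hx, rfl⟩ := h.exists_ofFn
  exact ha _ n.succ_pos i x hx

lemma Composable.mem_adjoin {n : ℕ} {c : Bool} {z : A} (h : Composable D E a n c z) :
    z ∈ Algebra.adjoin ℂ (({a, star a} : Set A) ∪ (D : Set A)) := by
  induction h with
  | nil c => exact one_mem _
  | snoc _ hx ih => exact mul_mem ih (PB_subset_adjoin hx)

/-- The subalgebra attached to index `t` of the free family: `0` for `a`, `1` for `u`. -/
def freeAlg (D : StarSubalgebra ℂ A) (a u : A) (t : Fin 2) : Subalgebra ℂ A :=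
  Algebra.adjoin ℂ ((![({a, star a} : Set A), ({u, star u} : Set A)] : Fin 2 → Set A) t ∪ (D : Set A))

/-- Nonempty products of centred elements taken alternately from the two free subalgebras, the
first factor coming from the subalgebra with index `t`. -/
inductive Alternating (D : StarSubalgebra ℂ A) (E : A →ₗ[ℂ] A) (a u : A) : Fin 2 → A → Prop
  | single {t : Fin 2} {x : A} : x ∈ freeAlg D a u t → E x = 0 → Alternating D E a u t x
  | cons {t t' : Fin 2} {x y : A} : x ∈ freeAlg D a u t → E x = 0 → t ≠ t' →
      Alternating D E a u t' y → Alternating D E a u t (x * y)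

lemma Alternating.exists_ofFn {t : Fin 2} {z : A} (h : Alternating D E a u t z) :
    ∃ (n : ℕ) (s : Fin (n + 1) → Fin 2) (x : Fin (n + 1) → A), s 0 = t ∧
      (∀ k, x k ∈ freeAlg D a u (s k)) ∧
      (∀ (k : Fin (n + 1)) (h : k.val + 1 < n + 1), s k ≠ s ⟨k.val + 1, h⟩) ∧
      (∀ k, E (x k) = 0) ∧ (List.ofFn x).prod = z := by
  induction h with
  | @single t x hx h0 =>
    exact ⟨0, fun _ => t, fun _ => x, rfl, fun _ => hx, fun k h => by omega, fun _ => h0,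
      by simp⟩
  | @cons t t' x y hx h0 hne _ ih =>
    obtain ⟨n, s, w, hs, hw, halt, hz, hp⟩ := ih
    refine ⟨n + 1, Fin.cons t s, Fin.cons x w, rfl, ?_, ?_, ?_, ?_⟩
    · intro k
      refine Fin.cases hx (fun k => ?_) k
      simpa using hw k
    · intro k
      refine Fin.cases (fun _ => ?_) (fun k hk => ?_) k
      · have : (⟨(0 : Fin (n + 2)).val + 1, by simp⟩ : Fin (n + 2)) = Fin.succ 0 := rfl
        rw [this, Fin.cons_zero, Fin.cons_succ, hs]
        exact hne
      · have hk' : k.val + 1 < n + 1 := by simpa using hk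
        have : (⟨k.succ.val + 1, hk⟩ : Fin (n + 2)) = Fin.succ ⟨k.val + 1, hk'⟩ := rfl
        rw [this, Fin.cons_succ, Fin.cons_succ]
        exact halt k hk'
    · intro k
      refine Fin.cases h0 (fun k => ?_) k
      simpa using hz k
    · rw [List.ofFn_succ, List.prod_cons]
      simp only [Fin.cons_zero, Fin.cons_succ, hp]

/-- The span of the alternating products with first index `t`. -/
def altProdSpan (D : StarSubalgebra ℂ A) (E : A →ₗ[ℂ] A) (a u : A) (t : Fin 2) : Submodule ℂ A :=
  Submodule.span ℂ {x | Alternating D E a u t x}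

lemma cond_eq_zero_of_mem_altProdSpan
    (hfree : FreeAmalg (D : Set A) E ![({a, star a} : Set A), ({u, star u} : Set A)])
    {t : Fin 2} {x : A} (hx : x ∈ altProdSpan D E a u t) : E x = 0 := by
  have : altProdSpan D E a u t ≤ LinearMap.ker E := by
    refine Submodule.span_le.2 fun z hz => ?_
    obtain ⟨n, s, w, -, hw, halt, h0, rfl⟩ := Alternating.exists_ofFn hz
    exact hfree _ n.succ_pos s w hw halt h0
  exact this hx

lemma mul_mem_altProdSpan {t t' : Fin 2} {x y : A} (hx : x ∈ freeAlg D a u t) (h0 : E x = 0)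
    (hne : t ≠ t') (hy : y ∈ altProdSpan D E a u t') : x * y ∈ altProdSpan D E a u t := by
  induction hy using Submodule.span_induction with
  | mem y hy => exact Submodule.subset_span (.cons hx h0 hne hy)
  | zero => simp
  | add y z _ _ hy hz => rw [mul_add]; exact add_mem hy hz
  | smul c y _ hy => rw [mul_smul_comm]; exact Submodule.smul_mem _ _ hy

/-- Each of `u`, `star u` is a centred element of the algebra of `u` plus a scalar. -/
lemma exists_centred_add_scalar (hE : IsCondExp (D : Set A) E) (hu : IsScalarRV (D : Set A) E u)
    (b : Bool) : ∃ v ∈ freeAlg D a u 1, E v = 0 ∧ ∃ c : ℂ, letter u b = v + algebraMap ℂ A c := by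
  have key : ∃ c : ℂ, E (letter u b) = algebraMap ℂ A c := by
    cases b
    · simpa [letter] using hu.2.2 0 1
    · simpa [letter] using hu.2.2 1 0
  obtain ⟨c, hc⟩ := key
  refine ⟨letter u b - algebraMap ℂ A c, sub_mem (letter_mem_adjoin b _)
    (Subalgebra.algebraMap_mem _ c), ?_, c, by simp⟩
  rw [map_sub, hc, cond_of_mem hE (D.algebraMap_mem c), sub_self]

/-! ### Chain pairs -/

/-- The power of `u` in front of a word of `u * a` that starts with the letter `b`. -/
def startU (u : A) (b : Bool) : A := if b then u else 1

/-- The power of `u` at the end of a word of `u * a` that ends with the letter `b`. -/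
def endU (u : A) (b : Bool) : A := if b then 1 else star u

/-- Pairs `(x₁ x₂ ⋯ xₖ, x₁ g₁ x₂ ⋯ xₖ gₖ)` with `k ≥ 1`, `x_r ∈ PB i_r i_{r+1}` and first index
`b`. Between `x_r` and `x_{r+1}` stands `u` or `star u` according to the common letter `i_{r+1}`;
the power of `u` in front, `startU u b`, is left out. -/
inductive ChainPair (D : StarSubalgebra ℂ A) (E : A →ₗ[ℂ] A) (a u : A) : Bool → A → A → Prop
  | single {b c : Bool} {x : A} : x ∈ PB D E a b c → ChainPair D E a u b x (x * endU u c)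
  | cons {b c : Bool} {x y y' : A} : x ∈ PB D E a b c → ChainPair D E a u c y y' →
      ChainPair D E a u b (x * y) (x * (letter u c * y'))

lemma letter_unitary_mul (b : Bool) :
    letter (u * a) b = startU u b * letter a b * endU u b := by
  cases b <;> simp [letter, startU, endU]

lemma endU_mul_startU (b : Bool) : endU u b * startU u b = letter u b := by
  cases b <;> simp [letter, startU, endU]

lemma endU_mul_startU_not (h : star u * u = 1) (b : Bool) : endU u b * startU u (!b) = 1 := by
  cases b <;> simp [startU, endU, h]

lemma startU_mul_endU_not (h : u * star u = 1) (b : Bool) : startU u b * endU u (!b) = 1 := by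
  cases b <;> simp [startU, endU, h]

lemma startU_mul_letter_not (h : u * star u = 1) (b : Bool) :
    startU u b * letter u (!b) = startU u (!b) := by
  cases b <;> simp [startU, letter, h]

lemma startU_comm (hu : IsScalarRV (D : Set A) E u) {d : A} (hd : d ∈ D) (b : Bool) :
    d * startU u b = startU u b * d := by
  cases b
  · simp [startU]
  · simpa [startU] using (hu.2.1 d hd).1

lemma endU_comm (hu : IsScalarRV (D : Set A) E u) {d : A} (hd : d ∈ D) (b : Bool) :
    d * endU u b = endU u b * d := by
  cases b
  · simpa [endU] using (hu.2.1 d hd).2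
  · simp [endU]

lemma ChainPair.left_mul (hE : IsCondExp (D : Set A) E) {d : A} (hd : d ∈ D) {b : Bool} {x x' : A}
    (h : ChainPair D E a u b x x') : ChainPair D E a u b (d * x) (d * x') := by
  cases h with
  | single hx =>
    rw [← mul_assoc]
    exact .single (left_mul_mem_PB hE hd hx)
  | cons hx hy =>
    rw [← mul_assoc, ← mul_assoc d]
    exact .cons (left_mul_mem_PB hE hd hx) hy

lemma ChainPair.exists_composable {b : Bool} {x x' : A} (h : ChainPair D E a u b x x') :
    ∀ {n : ℕ} {z : A}, Composable D E a n b z → ∃ m c, Composable D E a (m + 1) c (z * x) := by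
  induction h with
  | single hx => exact fun hz => ⟨_, _, hz.snoc hx⟩
  | cons hx _ ih =>
    intro n z hz
    rw [← mul_assoc]
    exact ih (hz.snoc hx)

/-- The second entry of a chain pair is a combination of alternating centred products. The left
multiplier `z` collects the factors that become adjacent when the scalar part of some `u` is selected. -/
lemma ChainPair.mul_mem_span_alternating (hE : IsCondExp (D : Set A) E)
    (ha : RDiagWithAmalg (D : Set A) E a) (hu : IsScalarRV (D : Set A) E u)
    {b : Bool} {x x' : A} (h : ChainPair D E a u b x x') :
    ∀ {n : ℕ} {z : A}, Composable D E a n b z → z * x' ∈ altProdSpan D E a u 0 := by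
  induction h with
  | @single b c x hx =>
    intro n z hz
    have hzx := hz.snoc hx
    have hmem : z * x ∈ altProdSpan D E a u 0 :=
      Submodule.subset_span (.single hzx.mem_adjoin (hzx.cond_eq_zero ha))
    rw [← mul_assoc]
    cases c
    · obtain ⟨v, hv, hv0, c, hc⟩ := exists_centred_add_scalar (a := a) hE hu false
      have hc' : endU u false = v + algebraMap ℂ A c := hc
      rw [hc', mul_add, ← Algebra.commutes, ← Algebra.smul_def]
      exact add_mem (mul_mem_altProdSpan hzx.mem_adjoin (hzx.cond_eq_zero ha) (by decide)
        (Submodule.subset_span (.single hv hv0))) (Submodule.smul_mem _ _ hmem)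
    · simpa [endU] using hmem
  | @cons b c x y y' hx _ ih =>
    intro n z hz
    have hzx := hz.snoc hx
    obtain ⟨v, hv, hv0, k, hk⟩ := exists_centred_add_scalar (a := a) hE hu c
    have hy' : y' ∈ altProdSpan D E a u 0 := by simpa using ih (.nil c)
    rw [← mul_assoc, hk, add_mul, mul_add, ← Algebra.smul_def, mul_smul_comm]
    exact add_mem (mul_mem_altProdSpan hzx.mem_adjoin (hzx.cond_eq_zero ha) (by decide)
      (mul_mem_altProdSpan hv hv0 (by decide) hy')) (Submodule.smul_mem _ _ (ih hzx))

lemma ChainPair.cond_fst (ha : RDiagWithAmalg (D : Set A) E a) {b : Bool} {x x' : A}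
    (h : ChainPair D E a u b x x') : E x = 0 := by
  obtain ⟨m, c, hm⟩ := h.exists_composable (.nil b)
  simpa using hm.cond_eq_zero ha

lemma ChainPair.cond_snd (hE : IsCondExp (D : Set A) E)
    (ha : RDiagWithAmalg (D : Set A) E a) (hu : IsScalarRV (D : Set A) E u)
    (hfree : FreeAmalg (D : Set A) E ![({a, star a} : Set A), ({u, star u} : Set A)])
    {b : Bool} {x x' : A} (h : ChainPair D E a u b x x') : E (startU u b * x') = 0 := by
  have hx' : x' ∈ altProdSpan D E a u 0 := by
    simpa using h.mul_mem_span_alternating hE ha hu (.nil b)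
  have h0 := cond_eq_zero_of_mem_altProdSpan hfree hx'
  cases b
  · simpa [startU] using h0
  · obtain ⟨v, hv, hv0, k, hk⟩ := exists_centred_add_scalar (a := a) hE hu true
    have hk' : startU u true = v + algebraMap ℂ A k := hk
    have hvx : v * x' ∈ altProdSpan D E a u 1 := mul_mem_altProdSpan hv hv0 (by decide) hx'
    rw [hk', add_mul, ← Algebra.smul_def, map_add, map_smul, h0,
      cond_eq_zero_of_mem_altProdSpan hfree hvx, smul_zero, add_zero]

/-! ### The space of pairs -/

/-- The span in `A × A` of the diagonal pairs `(d, d)`, `d ∈ D`, and of the chain pairs with the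
leading power of `u` restored. -/
def pairSpan (D : StarSubalgebra ℂ A) (E : A →ₗ[ℂ] A) (a u : A) : Submodule ℂ (A × A) :=
  Submodule.span ℂ ({p | ∃ d ∈ D, p = (d, d)} ∪
    {p | ∃ b x x', ChainPair D E a u b x x' ∧ p = (x, startU u b * x')})

lemma diag_mem_pairSpan {d : A} (hd : d ∈ D) : (d, d) ∈ pairSpan D E a u :=
  Submodule.subset_span (Or.inl ⟨d, hd, rfl⟩)

lemma ChainPair.mem_pairSpan {b : Bool} {x x' : A} (h : ChainPair D E a u b x x') :
    (x, startU u b * x') ∈ pairSpan D E a u :=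
  Submodule.subset_span (Or.inr ⟨b, x, x', h, rfl⟩)

lemma mul_mem_pairSpan_of_generators {q : A × A}
    (hD : ∀ d ∈ D, q * (d, d) ∈ pairSpan D E a u)
    (hC : ∀ b x x', ChainPair D E a u b x x' → q * (x, startU u b * x') ∈ pairSpan D E a u)
    {p : A × A} (hp : p ∈ pairSpan D E a u) : q * p ∈ pairSpan D E a u := by
  induction hp using Submodule.span_induction with
  | mem p hp =>
    obtain ⟨d, hd, rfl⟩ | ⟨b, x, x', h, rfl⟩ := hp
    · exact hD d hd
    · exact hC b x x' h
  | zero => simp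
  | add x y _ _ hx hy => rw [mul_add]; exact add_mem hx hy
  | smul c x _ hx => rw [mul_smul_comm]; exact Submodule.smul_mem _ _ hx

lemma pairSpan_left_mul (hE : IsCondExp (D : Set A) E) (hu : IsScalarRV (D : Set A) E u)
    {d : A} (hd : d ∈ D) {p : A × A} (hp : p ∈ pairSpan D E a u) :
    (d, d) * p ∈ pairSpan D E a u := by
  refine mul_mem_pairSpan_of_generators (fun d' hd' => ?_) (fun b x x' h => ?_) hp
  · rw [Prod.mk_mul_mk]
    exact diag_mem_pairSpan (mul_mem hd hd')
  rw [Prod.mk_mul_mk, ← mul_assoc, startU_comm hu hd, mul_assoc]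
  exact (h.left_mul hE hd).mem_pairSpan

/-- A letter in front of a word starting with the opposite letter splits into a centred element of
`PB b (!b)` and an element of `D`. -/
lemma exists_letter_mul_eq (hE : IsCondExp (D : Set A) E) {b : Bool} {x : A}
    (hx : x ∈ PB D E a (!b) (!b)) :
    ∃ w ∈ PB D E a b (!b), ∃ d ∈ D, letter a b * x = w + d := by
  have hQ : letter a b * x ∈ altSpan D a b 0 :=
    letter_mul_mem_altSpan (e := 1) (m := 1) rfl (mem_PB_self.1 hx)
  have hd : E (letter a b * x) ∈ D := hE.2.1 _
  refine ⟨letter a b * x - E (letter a b * x), mem_PB_not.2 ⟨sub_mem hQ (mem_altSpan_zero hd), ?_⟩,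
    _, hd, by simp⟩
  rw [map_sub, cond_of_mem hE hd, sub_self]

lemma letter_mul_mem_PB {b : Bool} {x : A} (hx : x ∈ PB D E a (!b) b) :
    letter a b * x ∈ PB D E a b b := by
  have hx' : x ∈ PB D E a (!b) (!!b) := by rwa [Bool.not_not]
  exact mem_PB_self.2 (letter_mul_mem_altSpan (m := 0) rfl (mem_PB_not.1 hx').1)

lemma pairSpan_letter_mul (hE : IsCondExp (D : Set A) E) (hu : IsScalarRV (D : Set A) E u)
    (huu : star u * u = 1 ∧ u * star u = 1) (b : Bool) {p : A × A}
    (hp : p ∈ pairSpan D E a u) :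
    (letter a b, letter (u * a) b) * p ∈ pairSpan D E a u := by
  refine mul_mem_pairSpan_of_generators (fun d hd => ?_) (fun c x x' h => ?_) hp
  · have := (ChainPair.single (u := u) (letter_mul_mem_PB_of_mem (E := E) (a := a) (b := b)
      hd)).mem_pairSpan
    rw [Prod.mk_mul_mk, letter_unitary_mul, mul_assoc, ← endU_comm hu hd]
    simpa only [mul_assoc] using this
  obtain rfl | rfl := Bool.eq_or_eq_not c b
  · have hl : letter a c ∈ PB D E a c c := by
      simpa using letter_mul_mem_PB_of_mem (E := E) (a := a) (b := c) (one_mem D)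
    have := (ChainPair.cons hl h).mem_pairSpan
    rw [← endU_mul_startU (u := u)] at this
    rw [Prod.mk_mul_mk, letter_unitary_mul]
    simpa only [mul_assoc] using this
  · have hq : (letter a b, letter (u * a) b) * (x, startU u (!b) * x') =
        (letter a b * x, startU u b * (letter a b * x')) := by
      rw [Prod.mk_mul_mk, letter_unitary_mul]
      simp only [mul_assoc]
      rw [← mul_assoc (endU u b), endU_mul_startU_not huu.1, one_mul]
    rw [hq]
    cases h with
    | @single _ c _ hx =>
      obtain rfl | rfl := Bool.eq_or_eq_not c b
      · have := (ChainPair.single (u := u) (letter_mul_mem_PB hx)).mem_pairSpan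
        simpa only [mul_assoc] using this
      · obtain ⟨w, hw, d, hd, e⟩ := exists_letter_mul_eq hE hx
        have key : (letter a b * x, startU u b * (letter a b * (x * endU u (!b)))) =
            (w, startU u b * (w * endU u (!b))) + (d, d) := by
          rw [← mul_assoc (letter a b), e, add_mul, mul_add, endU_comm hu hd,
            ← mul_assoc _ _ d, startU_mul_endU_not huu.2, one_mul, Prod.mk_add_mk]
        rw [key]
        exact add_mem (ChainPair.single hw).mem_pairSpan (diag_mem_pairSpan hd)
    | @cons _ c x y y' hx hy =>
      obtain rfl | rfl := Bool.eq_or_eq_not c b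
      · have := (ChainPair.cons (letter_mul_mem_PB hx) hy).mem_pairSpan
        simpa only [mul_assoc] using this
      · obtain ⟨w, hw, d, hd, e⟩ := exists_letter_mul_eq hE hx
        have key : (letter a b * (x * y), startU u b * (letter a b * (x * (letter u (!b) * y')))) =
            (w * y, startU u b * (w * (letter u (!b) * y'))) +
              (d * y, startU u (!b) * (d * y')) := by
          rw [← mul_assoc (letter a b), ← mul_assoc (letter a b), e, add_mul, add_mul, mul_add,
            Prod.mk_add_mk]
          congr 2
          have hcomm : d * letter u (!b) = letter u (!b) * d := by
            rw [← endU_mul_startU, ← mul_assoc, endU_comm hu hd, mul_assoc, startU_comm hu hd,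
              mul_assoc]
          rw [← mul_assoc d, hcomm, mul_assoc, ← mul_assoc (startU u b),
            startU_mul_letter_not huu.2]
        rw [key]
        exact add_mem (ChainPair.cons hw hy).mem_pairSpan (hy.left_mul hE hd).mem_pairSpan

lemma ofFn_prod_mem_pairSpan (hE : IsCondExp (D : Set A) E) (hu : IsScalarRV (D : Set A) E u)
    (huu : star u * u = 1 ∧ u * star u = 1) :
    ∀ (n : ℕ) (s : Fin n → Bool) (d : Fin n → A), (∀ i, d i ∈ D) →
      ((List.ofFn fun i => letter a (s i) * d i).prod,
        (List.ofFn fun i => letter (u * a) (s i) * d i).prod) ∈ pairSpan D E a u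
  | 0, _, _, _ => by simpa using diag_mem_pairSpan (one_mem D)
  | n + 1, s, d, hd => by
    have := pairSpan_letter_mul hE hu huu (s 0) (pairSpan_left_mul hE hu (hd 0)
      (ofFn_prod_mem_pairSpan hE hu huu n (fun i => s i.succ) (fun i => d i.succ)
        fun i => hd i.succ))
    simpa only [List.ofFn_succ, List.prod_cons, Prod.mk_mul_mk, mul_assoc] using this

lemma cond_eq_of_mem_pairSpan (hE : IsCondExp (D : Set A) E)
    (ha : RDiagWithAmalg (D : Set A) E a) (hu : IsScalarRV (D : Set A) E u)
    (hfree : FreeAmalg (D : Set A) E ![({a, star a} : Set A), ({u, star u} : Set A)])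
    {p : A × A} (hp : p ∈ pairSpan D E a u) : E p.1 = E p.2 := by
  induction hp using Submodule.span_induction with
  | mem p hp =>
    obtain ⟨d, -, rfl⟩ | ⟨b, x, x', h, rfl⟩ := hp
    · rfl
    · exact (h.cond_fst ha).trans (h.cond_snd hE ha hu hfree).symm
  | zero => rfl
  | add x y _ _ hx hy => simp [hx, hy]
  | smul c x _ hx => simp [hx]

end Proof

/-- If `a` is `R`-diagonal with amalgamation over `D`, then for every unitary
scalar random variable `u` such that `{a, a*}` and `{u, u*}` are free with amalgamation over
`D`, the elements `a` and `u·a` are identically `D`-distributed. -/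
theorem rDiagonal_with_amalgamation_identDistrib_unitary_mul
    {A : Type*} [Ring A] [Algebra ℂ A] [StarRing A] [StarModule ℂ A]
    (D : StarSubalgebra ℂ A) (E : A →ₗ[ℂ] A) (hE : IsCondExp (D : Set A) E)
    (a : A) (ha : RDiagWithAmalg (D : Set A) E a) :
    ∀ u : A, IsScalarRV (D : Set A) E u →
      (star u * u = 1 ∧ u * star u = 1) →
      FreeAmalg (D : Set A) E ![({a, star a} : Set A), ({u, star u} : Set A)] →
      IdentDistrib (D : Set A) E a (u * a) := by
  intro u hu huu hfree n _ s d hd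
  refine cond_eq_of_mem_pairSpan hE ha hu hfree (ofFn_prod_mem_pairSpan hE hu huu n s _ fun i => ?_)
  split_ifs
  exacts [hd i, one_mem D]
end

section
/- Let A be a unital *-algebra carrying an F-valued probability space structure (F ⊆ A, E) and a scalar probability space structure (A, φ) which are compatible. Suppose a ∈ A is R-diagonal with amalgamation over F, and suppose the sets {aa*} and F are free with respect to φ. Then a is R-diagonal with respect to φ. -/
noncomputable section

namespace RDiagAux

/-! ### Chains of factors -/

section Chains

variable {A : Type*} [Ring A]

/-- `Ch Q n i k z`: the element `z` is a product `x₁ ⋯ xₙ` with `x_m ∈ Q i_m i_{m+1}` for some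
path of indices `i = i₁, …, i_{n+1} = k`. -/
inductive Ch (Q : Fin 2 → Fin 2 → Set A) : ℕ → Fin 2 → Fin 2 → A → Prop
  | nil (i : Fin 2) : Ch Q 0 i i 1
  | cons {n : ℕ} {i j k : Fin 2} {x y : A} (hx : x ∈ Q i j) (hy : Ch Q n j k y) :
      Ch Q (n + 1) i k (x * y)

theorem Ch.append {Q : Fin 2 → Fin 2 → Set A} {n m : ℕ} {i j k : Fin 2} {x y : A}
    (hx : Ch Q n i j x) (hy : Ch Q m j k y) : Ch Q (n + m) i k (x * y) := by
  induction hx with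
  | nil i => simpa using hy
  | @cons n i j' k' x z hx hz ih =>
    have := Ch.cons hx (ih hy)
    rw [mul_assoc, show n + 1 + m = n + m + 1 by omega]
    exact this

theorem Ch.single {Q : Fin 2 → Fin 2 → Set A} {i j : Fin 2} {x : A} (hx : x ∈ Q i j) :
    Ch Q 1 i j x := by
  simpa using Ch.cons hx (Ch.nil j)

theorem Ch.zero_inv {Q : Fin 2 → Fin 2 → Set A} {i k : Fin 2} {z : A} (h : Ch Q 0 i k z) :
    i = k ∧ z = 1 := by
  cases h; exact ⟨rfl, rfl⟩

theorem Ch.succ_inv {Q : Fin 2 → Fin 2 → Set A} {n : ℕ} {i k : Fin 2} {z : A}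
    (h : Ch Q (n + 1) i k z) : ∃ j x y, x ∈ Q i j ∧ Ch Q n j k y ∧ z = x * y := by
  cases h with
  | cons hx hy => exact ⟨_, _, _, hx, hy, rfl⟩

theorem Ch.snoc_inv {Q : Fin 2 → Fin 2 → Set A} {n : ℕ} {i k : Fin 2} {z : A}
    (h : Ch Q (n + 1) i k z) : ∃ j x y, Ch Q n i j x ∧ y ∈ Q j k ∧ z = x * y := by
  induction n generalizing i z with
  | zero =>
    obtain ⟨j, x, y, hx, hy, rfl⟩ := h.succ_inv
    obtain ⟨rfl, rfl⟩ := hy.zero_inv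
    exact ⟨i, 1, x, Ch.nil i, hx, by simp⟩
  | succ n ih =>
    obtain ⟨j, x, y, hx, hy, rfl⟩ := h.succ_inv
    obtain ⟨j', x', y', hx', hy', rfl⟩ := ih hy
    exact ⟨j', x * x', y', Ch.cons hx hx', hy', by rw [mul_assoc]⟩

theorem Ch.mono {Q R : Fin 2 → Fin 2 → Set A} (hQR : ∀ i j, Q i j ⊆ R i j) {n : ℕ} {i k : Fin 2}
    {z : A} (h : Ch Q n i k z) : Ch R n i k z := by
  induction h with
  | nil i => exact Ch.nil i
  | cons hx _ ih => exact Ch.cons (hQR _ _ hx) ih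

theorem Ch.ofFn {Q : Fin 2 → Fin 2 → Set A} (n : ℕ) (i : Fin (n + 1) → Fin 2) (x : Fin n → A)
    (h : ∀ k : Fin n, x k ∈ Q (i k.castSucc) (i k.succ)) :
    Ch Q n (i 0) (i (Fin.last n)) (List.ofFn x).prod := by
  induction n with
  | zero => simpa using Ch.nil (Q := Q) (i 0)
  | succ n ih =>
    rw [List.ofFn_succ, List.prod_cons]
    refine Ch.cons (h 0) ?_
    exact ih (fun k => i k.succ) (fun k => x k.succ) (fun k => h k.succ)

theorem Ch.exists_ofFn {Q : Fin 2 → Fin 2 → Set A} {n : ℕ} {j k : Fin 2} {z : A}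
    (h : Ch Q n j k z) : ∃ (i : Fin (n + 1) → Fin 2) (x : Fin n → A), i 0 = j ∧
      (∀ m : Fin n, x m ∈ Q (i m.castSucc) (i m.succ)) ∧ z = (List.ofFn x).prod := by
  induction h with
  | nil i => exact ⟨fun _ => i, fun _ => 1, rfl, fun m => m.elim0, by simp⟩
  | @cons n j l k x y hx hy ih =>
    obtain ⟨i, w, hi, hw, rfl⟩ := ih
    refine ⟨Fin.cons j i, Fin.cons x w, rfl, ?_, by simp [List.ofFn_succ]⟩
    intro m
    refine Fin.cases ?_ (fun m => ?_) m
    · simpa [hi] using hx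
    · simpa [← Fin.succ_castSucc] using hw m

end Chains

/-! ### Spans of alternating words -/

theorem altList_even_append (b : Bool) (n k : ℕ) :
    altList b (2 * n) ++ altList b k = altList b (2 * n + k) := by
  induction n with
  | zero => simp [altList]
  | succ n ih =>
    rw [show 2 * (n + 1) = 2 * n + 1 + 1 by ring,
      show 2 * n + 1 + 1 + k = (2 * n + k) + 1 + 1 by ring]
    simp [altList, ih]

theorem altList_odd_append (b : Bool) (n k : ℕ) :
    altList b (2 * n + 1) ++ altList (!b) k = altList b (2 * n + 1 + k) := by
  rw [show 2 * n + 1 + k = (2 * n + k) + 1 by ring]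
  simp only [altList, List.cons_append, altList_even_append]

section Words

set_option linter.unusedSectionVars false

variable {A : Type*} [Ring A] [Algebra ℂ A] [StarRing A] [StarModule ℂ A]

theorem wordSet_mul (F : StarSubalgebra ℂ A) (a : A) (l₁ l₂ : List Bool) {x y : A}
    (hx : x ∈ wordSet (F : Set A) a l₁) (hy : y ∈ wordSet (F : Set A) a l₂) :
    x * y ∈ wordSet (F : Set A) a (l₁ ++ l₂) := by
  induction l₁ generalizing x with
  | nil =>
    have hx' : x ∈ F := hx
    cases l₂ with
    | nil => exact F.mul_mem hx' hy
    | cons b l =>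
      obtain ⟨d, hd, w, hw, rfl⟩ := hy
      exact ⟨x * d, F.mul_mem hx' hd, w, hw, by simp only [mul_assoc]⟩
  | cons b l ih =>
    obtain ⟨d, hd, w, hw, rfl⟩ := hx
    exact ⟨d, hd, w * y, ih hw, by simp only [mul_assoc]⟩

theorem wordSet_mono {D D' : Set A} (h : D ⊆ D') (a : A) (l : List Bool) :
    wordSet D a l ⊆ wordSet D' a l := by
  induction l with
  | nil => exact h
  | cons b l ih =>
    rintro x ⟨d, hd, w, hw, rfl⟩
    exact ⟨d, h hd, w, ih hw, rfl⟩

/-- The span of the alternating `F`-words in `a` starting with the letter `b`, of even length if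
`e = 0` and of odd length if `e = 1`. -/
def SW (F : StarSubalgebra ℂ A) (a : A) (b : Bool) (e : ℕ) : Submodule ℂ A :=
  Submodule.span ℂ (⋃ m : ℕ, wordSet (F : Set A) a (altList b (2 * m + e)))

theorem SW_mul_aux (F : StarSubalgebra ℂ A) (a : A) {b b' b'' : Bool} {e e' e'' : ℕ}
    (h : ∀ m m', ∃ k, altList b (2 * m + e) ++ altList b' (2 * m' + e')
      = altList b'' (2 * k + e'')) :
    SW F a b e * SW F a b' e' ≤ SW F a b'' e'' := by
  unfold SW
  rw [Submodule.span_mul_span, Submodule.span_le]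
  rintro _ ⟨x, hx, y, hy, rfl⟩
  obtain ⟨m, hm⟩ := Set.mem_iUnion.1 hx
  obtain ⟨m', hm'⟩ := Set.mem_iUnion.1 hy
  obtain ⟨k, hk⟩ := h m m'
  exact Submodule.subset_span (Set.mem_iUnion.2 ⟨k, hk ▸ wordSet_mul F a _ _ hm hm'⟩)

theorem SW_even_mul (F : StarSubalgebra ℂ A) (a : A) (b : Bool) (e : ℕ) :
    SW F a b 0 * SW F a b e ≤ SW F a b e :=
  SW_mul_aux F a fun m m' => ⟨m + m', by
    rw [add_zero, altList_even_append]; congr 1; ring⟩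

theorem SW_odd_mul_even (F : StarSubalgebra ℂ A) (a : A) (b : Bool) :
    SW F a b 1 * SW F a (!b) 0 ≤ SW F a b 1 :=
  SW_mul_aux F a fun m m' => ⟨m + m', by
    rw [altList_odd_append]; congr 1; ring⟩

theorem SW_odd_mul_odd (F : StarSubalgebra ℂ A) (a : A) (b : Bool) :
    SW F a b 1 * SW F a (!b) 1 ≤ SW F a b 0 :=
  SW_mul_aux F a fun m m' => ⟨m + m' + 1, by
    rw [altList_odd_append]; congr 1; ring⟩

theorem mem_SW_of_mem (F : StarSubalgebra ℂ A) (a : A) (b : Bool) {f : A} (hf : f ∈ F) :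
    f ∈ SW F a b 0 :=
  Submodule.subset_span (Set.mem_iUnion.2 ⟨0, hf⟩)

theorem letter_mem_SW (F : StarSubalgebra ℂ A) (a : A) (b : Bool) : letter a b ∈ SW F a b 1 :=
  Submodule.subset_span (Set.mem_iUnion.2
    ⟨0, 1, F.one_mem, 1, F.one_mem, by simp⟩)

theorem a_mem_SW (F : StarSubalgebra ℂ A) (a : A) : a ∈ SW F a true 1 :=
  letter_mem_SW F a true

theorem star_mem_SW (F : StarSubalgebra ℂ A) (a : A) : star a ∈ SW F a false 1 :=
  letter_mem_SW F a false

/-! ### The algebra of `a a⋆` and the centred parts -/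

/-- The algebra `T` generated by `a a⋆`, as a submodule. The scalars are adjoined explicitly to
agree with the algebra occurring in the definition of freeness. -/
def T (a : A) : Submodule ℂ A :=
  Subalgebra.toSubmodule (Algebra.adjoin ℂ ({a * star a} ∪ scalarD A))

/-- The `φ`-centred part of `T`. -/
def T0 (φ : A →ₗ[ℂ] ℂ) (a : A) : Submodule ℂ A := T a ⊓ LinearMap.ker φ

/-- The `φ`-centred part of `F`. -/
def F0 (φ : A →ₗ[ℂ] ℂ) (F : StarSubalgebra ℂ A) : Submodule ℂ A :=
  Subalgebra.toSubmodule F.toSubalgebra ⊓ LinearMap.ker φ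

/-- The two families of centred letters: `T₀` for the index `0` and `F₀` for the index `1`. -/
def Z (φ : A →ₗ[ℂ] ℂ) (F : StarSubalgebra ℂ A) (a : A) : Fin 2 → Submodule ℂ A :=
  ![T0 φ a, F0 φ F]

/-- `L` is an alternating list of centred letters from `T₀` and `F₀`. -/
def Alt (φ : A →ₗ[ℂ] ℂ) (F : StarSubalgebra ℂ A) (a : A) (L : List (Fin 2 × A)) : Prop :=
  L.IsChain (fun p q => p.1 ≠ q.1) ∧ ∀ p ∈ L, p.2 ∈ Z φ F a p.1

/-- The span `U` of the alternating words `f₁ p₁ f₂ ⋯ f_k`, `k ≥ 1`, in centred letters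
`fᵢ ∈ F₀` and `pᵢ ∈ T₀`. -/
def U (φ : A →ₗ[ℂ] ℂ) (F : StarSubalgebra ℂ A) (a : A) : Submodule ℂ A :=
  Submodule.span ℂ {x | ∃ L : List (Fin 2 × A), L ≠ [] ∧ Alt φ F a L ∧
    (∀ p ∈ L.head?, p.1 = 1) ∧ (∀ p ∈ L.getLast?, p.1 = 1) ∧ x = (L.map Prod.snd).prod}

theorem mem_F0 {φ : A →ₗ[ℂ] ℂ} {F : StarSubalgebra ℂ A} {f : A} :
    f ∈ F0 φ F ↔ f ∈ F ∧ φ f = 0 := by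
  simp [F0]

theorem mem_T0 {φ : A →ₗ[ℂ] ℂ} {a t : A} : t ∈ T0 φ a ↔ t ∈ T a ∧ φ t = 0 := by
  simp [T0]

theorem T0_le (φ : A →ₗ[ℂ] ℂ) (a : A) : T0 φ a ≤ T a := inf_le_left

theorem one_mem_T (a : A) : (1 : A) ∈ T a := Subalgebra.one_mem _

theorem algebraMap_mem_T (a : A) (c : ℂ) : algebraMap ℂ A c ∈ T a := Subalgebra.algebraMap_mem _ c

theorem mul_mem_T {a x y : A} (hx : x ∈ T a) (hy : y ∈ T a) : x * y ∈ T a :=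
  Subalgebra.mul_mem _ hx hy

theorem aa_mem_T (a : A) : a * star a ∈ T a :=
  Algebra.subset_adjoin (Or.inl rfl)

theorem F0_le_U (φ : A →ₗ[ℂ] ℂ) (F : StarSubalgebra ℂ A) (a : A) : F0 φ F ≤ U φ F a := by
  intro f hf
  refine Submodule.subset_span ⟨[(1, f)], by simp, ⟨by simp, ?_⟩, by simp, by simp, by simp⟩
  intro p hp
  obtain rfl := List.mem_singleton.1 hp
  exact hf

theorem U_mul (φ : A →ₗ[ℂ] ℂ) (F : StarSubalgebra ℂ A) (a : A) :
    U φ F a * T0 φ a * U φ F a ≤ U φ F a := by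
  have h : ∀ p ∈ T0 φ a, ∀ x ∈ U φ F a, ∀ y ∈ U φ F a, x * p * y ∈ U φ F a := by
    intro p hp x hx y hy
    induction hx using Submodule.span_induction with
    | zero => simp
    | add x x' _ _ hx hx' => simpa [add_mul] using add_mem hx hx'
    | smul c x _ hx => simpa using Submodule.smul_mem _ c hx
    | mem x hx =>
      induction hy using Submodule.span_induction with
      | zero => simp
      | add y y' _ _ hy hy' => simpa [mul_add] using add_mem hy hy'
      | smul c y _ hy => simpa using Submodule.smul_mem _ c hy
      | mem y hy =>
        obtain ⟨L, hL, ⟨hc, hm⟩, hh, hl, rfl⟩ := hx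
        obtain ⟨L', hL', ⟨hc', hm'⟩, hh', hl', rfl⟩ := hy
        refine Submodule.subset_span ⟨L ++ (0, p) :: L', by simp, ⟨?_, ?_⟩, ?_, ?_, ?_⟩
        · rw [List.isChain_append]
          refine ⟨hc, ?_, ?_⟩
          · rw [List.isChain_cons]
            refine ⟨fun q hq => ?_, hc'⟩
            simp [hh' q hq]
          · intro q hq r hr
            simp only [List.head?_cons, Option.mem_def, Option.some.injEq] at hr
            subst hr
            simp [hl q hq]
        · intro q hq
          rcases List.mem_append.1 hq with hq | hq
          · exact hm q hq
          · rcases List.mem_cons.1 hq with rfl | hq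
            · exact hp
            · exact hm' q hq
        · intro q hq
          rw [List.head?_append_of_ne_nil _ hL] at hq
          exact hh q hq
        · intro q hq
          rw [List.getLast?_append_of_ne_nil _ (by simp), List.getLast?_cons_of_ne_nil hL'] at hq
          exact hl' q hq
        · simp [mul_assoc]
  rw [Submodule.mul_le]
  intro z hz y hy
  refine Submodule.mul_induction_on hz (fun x hx p hp => h p hp x hx y hy) ?_
  intro u v hu hv
  rw [add_mul]
  exact add_mem hu hv

/-- Absorbing a centred element of `F` between two factors. The outer submodules `L` and `R` will
be `T` or `T₀`. -/
theorem absorb (φ : A →ₗ[ℂ] ℂ) (F : StarSubalgebra ℂ A) (a : A) (L R : Submodule ℂ A) :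
    (L ⊔ L * U φ F a * T0 φ a) * F0 φ F * (R ⊔ T0 φ a * U φ F a * R) ≤ L * U φ F a * R := by
  have hF := F0_le_U φ F a
  have hU := U_mul φ F a
  set u := U φ F a
  set t := T0 φ a
  set f := F0 φ F
  have h1 : f * t * u ≤ u := le_trans (by gcongr) hU
  have h2 : u * t * f ≤ u := le_trans (by gcongr) hU
  have h3 : u * t * f * t * u ≤ u := le_trans (by gcongr) hU
  rw [Submodule.sup_mul, Submodule.sup_mul, Submodule.mul_sup, Submodule.mul_sup]
  refine sup_le (sup_le ?_ ?_) (sup_le ?_ ?_)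
  · gcongr
  · calc L * f * (t * u * R) = L * (f * t * u) * R := by simp only [mul_assoc]
      _ ≤ _ := by gcongr
  · calc L * u * t * f * R = L * (u * t * f) * R := by simp only [mul_assoc]
      _ ≤ _ := by gcongr
  · calc L * u * t * f * (t * u * R) = L * (u * t * f * t * u) * R := by simp only [mul_assoc]
      _ ≤ _ := by gcongr

/-! ### Consequences of freeness -/

theorem free_list {φ : A →ₗ[ℂ] ℂ} (h1 : φ 1 = 1) {F : StarSubalgebra ℂ A} {a : A}
    (hfree : FreeScalar φ ![({a * star a} : Set A), (F : Set A)])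
    (L : List (Fin 2 × A)) (hne : L ≠ []) (hL : Alt φ F a L) :
    φ (L.map Prod.snd).prod = 0 := by
  have key := hfree L.length (List.length_pos_of_ne_nil hne) (fun k => (L.get k).1)
    (fun k => (L.get k).2) ?_ ?_ ?_
  · have hl : (List.ofFn fun k => (L.get k).2) = L.map Prod.snd := by
      rw [show (fun k => (L.get k).2) = Prod.snd ∘ L.get from rfl, ← List.map_ofFn, List.ofFn_get]
    rw [hl] at key
    have := congrArg φ key
    simpa [scalarE, Algebra.algebraMap_eq_smul_one, h1] using this
  · intro k
    have hk := hL.2 _ (List.get_mem L k)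
    generalize L.get k = p at hk ⊢
    obtain ⟨i, x⟩ := p
    fin_cases i
    · exact (mem_T0.1 hk).1
    · exact Algebra.subset_adjoin (Or.inl (mem_F0.1 hk).1)
  · intro k h
    exact List.isChain_iff_getElem.1 hL.1 k.val h
  · intro k
    have hk := hL.2 _ (List.get_mem L k)
    generalize L.get k = p at hk ⊢
    obtain ⟨i, x⟩ := p
    have : φ x = 0 := by
      fin_cases i
      · exact (mem_T0.1 hk).2
      · exact (mem_F0.1 hk).2
    simp [scalarE, this]

theorem sub_mem_T0 {φ : A →ₗ[ℂ] ℂ} (h1 : φ 1 = 1) {a t : A} (ht : t ∈ T a) :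
    t - φ t • (1 : A) ∈ T0 φ a :=
  mem_T0.2 ⟨sub_mem ht (Submodule.smul_mem _ _ (one_mem_T a)), by simp [h1]⟩

theorem sub_mem_F0 {φ : A →ₗ[ℂ] ℂ} (h1 : φ 1 = 1) {F : StarSubalgebra ℂ A} {f : A} (hf : f ∈ F) :
    f - φ f • (1 : A) ∈ F0 φ F :=
  mem_F0.2 ⟨sub_mem hf (F.toSubalgebra.smul_mem F.one_mem _), by simp [h1]⟩

theorem phi_T_mul_U {φ : A →ₗ[ℂ] ℂ} (h1 : φ 1 = 1) {F : StarSubalgebra ℂ A} {a : A}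
    (hfree : FreeScalar φ ![({a * star a} : Set A), (F : Set A)])
    {t u : A} (ht : t ∈ T a) (hu : u ∈ U φ F a) : φ (t * u) = 0 := by
  induction hu using Submodule.span_induction with
  | zero => simp
  | add x y _ _ hx hy => simp [mul_add, hx, hy]
  | smul c x _ hx => simp [hx]
  | mem x hx =>
    obtain ⟨L, hL, ⟨hc, hm⟩, hh, hl, rfl⟩ := hx
    have e1 := free_list h1 hfree L hL ⟨hc, hm⟩
    have e2 := free_list h1 hfree ((0, t - φ t • (1 : A)) :: L) (by simp) ⟨?_, ?_⟩
    · simpa [sub_mul, e1] using e2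
    · rw [List.isChain_cons]
      exact ⟨fun q hq => by simp [hh q hq], hc⟩
    · intro q hq
      rcases List.mem_cons.1 hq with rfl | hq
      · exact sub_mem_T0 h1 ht
      · exact hm q hq

theorem phi_F_mul_T0 {φ : A →ₗ[ℂ] ℂ} (h1 : φ 1 = 1) {F : StarSubalgebra ℂ A} {a : A}
    (hfree : FreeScalar φ ![({a * star a} : Set A), (F : Set A)])
    {g t : A} (hg : g ∈ F) (ht : t ∈ T0 φ a) : φ (g * t) = 0 := by
  have e2 := free_list h1 hfree [(1, g - φ g • (1 : A)), (0, t)] (by simp) ⟨by simp, ?_⟩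
  · simpa [sub_mul, (mem_T0.1 ht).2] using e2
  · intro q hq
    simp only [List.mem_cons, List.not_mem_nil, or_false] at hq
    rcases hq with rfl | rfl
    · exact sub_mem_F0 h1 hg
    · exact ht

theorem phi_F_mul_T0_U_T0 {φ : A →ₗ[ℂ] ℂ} (h1 : φ 1 = 1) {F : StarSubalgebra ℂ A} {a : A}
    (hfree : FreeScalar φ ![({a * star a} : Set A), (F : Set A)])
    {g s u t : A} (hg : g ∈ F) (hs : s ∈ T0 φ a) (hu : u ∈ U φ F a) (ht : t ∈ T0 φ a) :
    φ (g * (s * u * t)) = 0 := by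
  induction hu using Submodule.span_induction with
  | zero => simp
  | add x y _ _ hx hy => simp [mul_add, add_mul, hx, hy]
  | smul c x _ hx => simp [hx]
  | mem x hx =>
    obtain ⟨L, hL, ⟨hc, hm⟩, hh, hl, rfl⟩ := hx
    have hA : Alt φ F a ((0, s) :: (L ++ [(0, t)])) := by
      refine ⟨?_, ?_⟩
      · rw [List.isChain_cons, List.isChain_append]
        refine ⟨fun q hq => ?_, hc, by simp, ?_⟩
        · rw [List.head?_append_of_ne_nil _ hL] at hq
          simp [hh q hq]
        · intro q hq r hr
          simp only [List.head?_cons, Option.mem_def, Option.some.injEq] at hr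
          subst hr
          simp [hl q hq]
      · intro q hq
        simp only [List.mem_cons, List.mem_append, List.not_mem_nil, or_false] at hq
        rcases hq with rfl | hq | rfl
        · exact hs
        · exact hm q hq
        · exact ht
    have e1 := free_list h1 hfree _ (by simp) hA
    have e2 := free_list h1 hfree ((1, g - φ g • (1 : A)) :: (0, s) :: (L ++ [(0, t)]))
      (by simp) ⟨?_, ?_⟩
    · simp only [List.map_cons, List.map_append, List.map_nil, List.prod_cons, List.prod_append,
        List.prod_nil, mul_one, sub_mul, smul_mul_assoc, one_mul, map_sub, map_smul] at e1 e2
      simpa [e1, mul_assoc] using e2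
    · rw [List.isChain_cons]
      refine ⟨fun q hq => ?_, hA.1⟩
      simp only [List.head?_cons, Option.mem_def, Option.some.injEq] at hq
      subst hq
      simp
    · intro q hq
      rcases List.mem_cons.1 hq with rfl | hq
      · exact sub_mem_F0 h1 hg
      · exact hA.2 q hq

/-- An element which is `φ`-orthogonal to `F` has vanishing conditional expectation: test
against `(E x)⋆` and use faithfulness. -/
theorem condExp_eq_zero {F : StarSubalgebra ℂ A} {E : A →ₗ[ℂ] A} (hE : IsCondExp (F : Set A) E)
    {φ : A →ₗ[ℂ] ℂ} (hφ : IsFaithfulTracialState φ) (hcompat : ∀ x : A, φ (E x) = φ x) {x : A}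
    (hx : ∀ g ∈ F, φ (g * x) = 0) : E x = 0 := by
  have hs : star (E x) ∈ F := star_mem (hE.2.1 x)
  apply hφ.faithful
  have := hE.2.2 (star (E x)) hs 1 F.one_mem x
  simp only [mul_one] at this
  rw [← this, hcompat]
  exact hx _ hs

/-! ### The enlarged classes and merging -/

/-- The class `Q₁₁ = a⋆ (T + T U T₀)`. -/
def Q00 (φ : A →ₗ[ℂ] ℂ) (F : StarSubalgebra ℂ A) (a : A) : Submodule ℂ A :=
  Submodule.span ℂ {star a} * (T a ⊔ T a * U φ F a * T0 φ a)

/-- The class `Q₁₂`: the `φ`-centred elements of the span of even `F`-words `a⋆ ⋯ a`. -/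
def Q01 (φ : A →ₗ[ℂ] ℂ) (F : StarSubalgebra ℂ A) (a : A) : Submodule ℂ A :=
  SW F a false 0 ⊓ LinearMap.ker φ

/-- The class `Q₂₁ = T₀ + T₀ U T₀`. -/
def Q10 (φ : A →ₗ[ℂ] ℂ) (F : StarSubalgebra ℂ A) (a : A) : Submodule ℂ A :=
  T0 φ a ⊔ T0 φ a * U φ F a * T0 φ a

/-- The class `Q₂₂ = (T + T₀ U T) a`. -/
def Q11 (φ : A →ₗ[ℂ] ℂ) (F : StarSubalgebra ℂ A) (a : A) : Submodule ℂ A :=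
  (T a ⊔ T0 φ a * U φ F a * T a) * Submodule.span ℂ {a}

/-- The four enlarged classes, with indices `0, 1` standing for `1, 2`. -/
def Qset (φ : A →ₗ[ℂ] ℂ) (F : StarSubalgebra ℂ A) (a : A) : Fin 2 → Fin 2 → Set A :=
  ![![(Q00 φ F a : Set A), (Q01 φ F a : Set A)], ![(Q10 φ F a : Set A), (Q11 φ F a : Set A)]]

theorem SW_true_even_mul_mem (F : StarSubalgebra ℂ A) (a : A) {x y : A}
    (hx : x ∈ SW F a true 0) (hy : y ∈ SW F a true 0) : x * y ∈ SW F a true 0 :=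
  SW_even_mul F a true 0 (Submodule.mul_mem_mul hx hy)

theorem T_le_SW (F : StarSubalgebra ℂ A) (a : A) : T a ≤ SW F a true 0 := by
  intro x hx
  change x ∈ Algebra.adjoin ℂ ({a * star a} ∪ scalarD A) at hx
  induction hx using Algebra.adjoin_induction with
  | mem x hx =>
    rcases hx with rfl | ⟨c, rfl⟩
    · exact SW_odd_mul_odd F a true (Submodule.mul_mem_mul (a_mem_SW F a) (star_mem_SW F a))
    · exact mem_SW_of_mem F a true (F.toSubalgebra.algebraMap_mem c)
  | algebraMap c => exact mem_SW_of_mem F a true (F.toSubalgebra.algebraMap_mem c)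
  | add x y _ _ hx hy => exact add_mem hx hy
  | mul x y _ _ hx hy => exact SW_true_even_mul_mem F a hx hy

theorem U_le_SW (φ : A →ₗ[ℂ] ℂ) (F : StarSubalgebra ℂ A) (a : A) : U φ F a ≤ SW F a true 0 := by
  refine Submodule.span_le.2 ?_
  rintro _ ⟨L, -, ⟨-, hm⟩, -, -, rfl⟩
  induction L with
  | nil => exact mem_SW_of_mem F a true F.one_mem
  | cons p L ih =>
    rw [List.map_cons, List.prod_cons]
    refine SW_true_even_mul_mem F a ?_ (ih fun q hq => hm q (List.mem_cons_of_mem _ hq))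
    have hp := hm p List.mem_cons_self
    obtain ⟨i, x⟩ := p
    fin_cases i
    · exact T_le_SW F a (mem_T0.1 hp).1
    · exact mem_SW_of_mem F a true (mem_F0.1 hp).1

theorem mul3_le_SW (φ : A →ₗ[ℂ] ℂ) (F : StarSubalgebra ℂ A) (a : A) {L R : Submodule ℂ A}
    (hL : L ≤ T a) (hR : R ≤ T a) : L * U φ F a * R ≤ SW F a true 0 := by
  have h := SW_even_mul F a true 0
  calc L * U φ F a * R ≤ SW F a true 0 * SW F a true 0 * SW F a true 0 := by
        gcongr
        · exact hL.trans (T_le_SW F a)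
        · exact U_le_SW φ F a
        · exact hR.trans (T_le_SW F a)
    _ ≤ SW F a true 0 * SW F a true 0 := by gcongr
    _ ≤ _ := h

theorem Q00_le_SW (φ : A →ₗ[ℂ] ℂ) (F : StarSubalgebra ℂ A) (a : A) :
    Q00 φ F a ≤ SW F a false 1 := by
  refine le_trans ?_ (SW_odd_mul_even F a false)
  refine mul_le_mul' ?_ (sup_le (T_le_SW F a) (mul3_le_SW φ F a le_rfl (T0_le φ a)))
  simpa [Submodule.span_le] using star_mem_SW F a

theorem Q11_le_SW (φ : A →ₗ[ℂ] ℂ) (F : StarSubalgebra ℂ A) (a : A) :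
    Q11 φ F a ≤ SW F a true 1 := by
  refine le_trans ?_ (SW_even_mul F a true 1)
  refine mul_le_mul' (sup_le (T_le_SW F a) (mul3_le_SW φ F a (T0_le φ a) le_rfl)) ?_
  simpa [Submodule.span_le] using a_mem_SW F a

theorem Q10_le_SW (φ : A →ₗ[ℂ] ℂ) (F : StarSubalgebra ℂ A) (a : A) :
    Q10 φ F a ≤ SW F a true 0 :=
  sup_le ((T0_le φ a).trans (T_le_SW F a)) (mul3_le_SW φ F a (T0_le φ a) (T0_le φ a))

theorem Q10_condExp {F : StarSubalgebra ℂ A} {E : A →ₗ[ℂ] A} (hE : IsCondExp (F : Set A) E)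
    {φ : A →ₗ[ℂ] ℂ} (hφ : IsFaithfulTracialState φ) (hcompat : ∀ x : A, φ (E x) = φ x) {a : A}
    (hfree : FreeScalar φ ![({a * star a} : Set A), (F : Set A)]) {x : A} (hx : x ∈ Q10 φ F a) :
    E x = 0 := by
  refine condExp_eq_zero hE hφ hcompat fun g hg => ?_
  obtain ⟨t, ht, y, hy, rfl⟩ := Submodule.mem_sup.1 hx
  rw [mul_add, map_add, phi_F_mul_T0 hφ.unital hfree hg ht, zero_add]
  refine Submodule.mul_induction_on hy (fun z hz t ht => ?_) ?_
  · refine Submodule.mul_induction_on hz (fun s hs u hu => ?_) ?_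
    · exact phi_F_mul_T0_U_T0 hφ.unital hfree hg hs hu ht
    · intro v w hv hw
      simp [mul_add, add_mul, hv, hw]
  · intro v w hv hw
    simp [mul_add, hv, hw]

/-- By traciality `φ (a⋆ s u t a) = φ ((t a a⋆ s) u)`, which lies in `φ (T U)`. -/
theorem phi_star_TUT {F : StarSubalgebra ℂ A} {φ : A →ₗ[ℂ] ℂ} (hφ : IsFaithfulTracialState φ)
    {a : A} (hfree : FreeScalar φ ![({a * star a} : Set A), (F : Set A)]) {y : A}
    (hy : y ∈ T a * U φ F a * T a) : φ (star a * y * a) = 0 := by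
  refine Submodule.mul_induction_on hy (fun z hz t ht => ?_) ?_
  · refine Submodule.mul_induction_on hz (fun s hs u hu => ?_) ?_
    · have e : φ (star a * (s * u * t) * a) = φ ((t * (a * star a) * s) * u) := by
        rw [show star a * (s * u * t) * a = (star a * s * u) * (t * a) by simp only [mul_assoc],
          hφ.tracial]
        simp only [mul_assoc]
      rw [e]
      exact phi_T_mul_U hφ.unital hfree (mul_mem_T (mul_mem_T ht (aa_mem_T a)) hs) hu
    · intro v w hv hw
      simp [mul_add, add_mul, hv, hw]
  · intro v w hv hw
    simp [mul_add, add_mul, hv, hw]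

theorem Q00_mul_Q10 (φ : A →ₗ[ℂ] ℂ) (F : StarSubalgebra ℂ A) (a : A) :
    Q00 φ F a * F0 φ F * Q10 φ F a ≤ Q00 φ F a := by
  unfold Q00 Q10
  rw [mul_assoc, mul_assoc]
  gcongr
  rw [← mul_assoc]
  exact (absorb φ F a (T a) (T0 φ a)).trans le_sup_right

theorem Q10_mul_Q10 (φ : A →ₗ[ℂ] ℂ) (F : StarSubalgebra ℂ A) (a : A) :
    Q10 φ F a * F0 φ F * Q10 φ F a ≤ Q10 φ F a :=
  (absorb φ F a (T0 φ a) (T0 φ a)).trans le_sup_right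

theorem Q10_mul_Q11 (φ : A →ₗ[ℂ] ℂ) (F : StarSubalgebra ℂ A) (a : A) :
    Q10 φ F a * F0 φ F * Q11 φ F a ≤ Q11 φ F a := by
  unfold Q11 Q10
  rw [← mul_assoc]
  gcongr
  exact (absorb φ F a (T0 φ a) (T a)).trans le_sup_right

theorem Q00_mul_Q11 {F : StarSubalgebra ℂ A} {φ : A →ₗ[ℂ] ℂ} (hφ : IsFaithfulTracialState φ)
    {a : A} (hfree : FreeScalar φ ![({a * star a} : Set A), (F : Set A)]) :
    Q00 φ F a * F0 φ F * Q11 φ F a ≤ Q01 φ F a := by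
  have h : Q00 φ F a * F0 φ F * Q11 φ F a ≤
      Submodule.span ℂ {star a} * (T a * U φ F a * T a) * Submodule.span ℂ {a} := by
    unfold Q00 Q11
    have := mul_le_mul' (mul_le_mul' (le_refl (Submodule.span ℂ {star a}))
      (absorb φ F a (T a) (T a))) (le_refl (Submodule.span ℂ {a}))
    simpa only [mul_assoc] using this
  refine h.trans (le_inf ?_ ?_)
  · refine le_trans ?_ (SW_odd_mul_odd F a false)
    refine mul_le_mul' (le_trans (mul_le_mul' ?_
      (mul3_le_SW φ F a le_rfl le_rfl)) (SW_odd_mul_even F a false)) ?_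
    · simpa [Submodule.span_le] using star_mem_SW F a
    · simpa [Submodule.span_le] using a_mem_SW F a
  · rw [Submodule.mul_le]
    intro x hx y hy
    obtain ⟨c, rfl⟩ := Submodule.mem_span_singleton.1 hy
    obtain ⟨z, hz, rfl⟩ := Submodule.mem_span_singleton_mul.1 hx
    simp [phi_star_TUT hφ hfree hz]

/-- Merging a centred element of `F` with its two neighbours. -/
theorem Qset_merge {F : StarSubalgebra ℂ A} {φ : A →ₗ[ℂ] ℂ} (hφ : IsFaithfulTracialState φ)
    {a : A} (hfree : FreeScalar φ ![({a * star a} : Set A), (F : Set A)]) {i j : Fin 2}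
    {x f y : A} (hx : x ∈ Qset φ F a i 0) (hf : f ∈ F0 φ F) (hy : y ∈ Qset φ F a 1 j) :
    x * f * y ∈ Qset φ F a i j := by
  fin_cases i <;> fin_cases j
  · exact Q00_mul_Q10 φ F a (Submodule.mul_mem_mul (Submodule.mul_mem_mul hx hf) hy)
  · exact Q00_mul_Q11 hφ hfree (Submodule.mul_mem_mul (Submodule.mul_mem_mul hx hf) hy)
  · exact Q10_mul_Q10 φ F a (Submodule.mul_mem_mul (Submodule.mul_mem_mul hx hf) hy)
  · exact Q10_mul_Q11 φ F a (Submodule.mul_mem_mul (Submodule.mul_mem_mul hx hf) hy)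

theorem Qset_subset_Pset {F : StarSubalgebra ℂ A} {E : A →ₗ[ℂ] A} (hE : IsCondExp (F : Set A) E)
    {φ : A →ₗ[ℂ] ℂ} (hφ : IsFaithfulTracialState φ) (hcompat : ∀ x : A, φ (E x) = φ x) {a : A}
    (hfree : FreeScalar φ ![({a * star a} : Set A), (F : Set A)]) {i j : Fin 2}
    (hij : ¬ (i = 0 ∧ j = 1)) : Qset φ F a i j ⊆ Pset (F : Set A) E a i j := by
  intro x hx
  fin_cases i <;> fin_cases j
  · exact Q00_le_SW φ F a hx
  · simp at hij
  · exact ⟨Q10_le_SW φ F a hx, Q10_condExp hE hφ hcompat hfree hx⟩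
  · exact Q11_le_SW φ F a hx

/-! ### Scalar words -/

theorem scalar_even_mem_T (a : A) (m : ℕ) :
    wordSet (scalarD A) a (altList true (2 * m)) ⊆ T a := by
  induction m with
  | zero =>
    rintro _ ⟨c, rfl⟩
    exact algebraMap_mem_T a c
  | succ m ih =>
    rintro _ ⟨_, ⟨c, rfl⟩, _, ⟨_, ⟨c', rfl⟩, w, hw, rfl⟩, rfl⟩
    have hw' : w ∈ wordSet (scalarD A) a (altList true (2 * m)) := hw
    have := mul_mem_T (aa_mem_T a) (ih hw')
    have := Submodule.smul_mem _ (c * c') this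
    simpa [letter, Algebra.algebraMap_eq_smul_one, mul_assoc, smul_smul, mul_comm c] using this

theorem scalar_odd_mem (a : A) (m : ℕ) :
    wordSet (scalarD A) a (altList true (2 * m + 1)) ⊆ (T a * Submodule.span ℂ {a} :) := by
  induction m with
  | zero =>
    rintro _ ⟨_, ⟨c, rfl⟩, _, ⟨c', rfl⟩, rfl⟩
    have := Submodule.mul_mem_mul (algebraMap_mem_T a (c * c'))
      (Submodule.mem_span_singleton_self (R := ℂ) a)
    simpa [letter, Algebra.algebraMap_eq_smul_one, mul_assoc, smul_smul, mul_comm] using this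
  | succ m ih =>
    rintro _ ⟨_, ⟨c, rfl⟩, _, ⟨_, ⟨c', rfl⟩, w, hw, rfl⟩, rfl⟩
    have hw' : w ∈ wordSet (scalarD A) a (altList true (2 * m + 1)) := hw
    obtain ⟨t, ht, rfl⟩ := Submodule.mem_mul_span_singleton.1 (ih hw')
    have := Submodule.smul_mem _ (c * c') (Submodule.mul_mem_mul (mul_mem_T (aa_mem_T a) ht)
      (Submodule.mem_span_singleton_self (R := ℂ) a))
    simpa [letter, Algebra.algebraMap_eq_smul_one, mul_assoc, smul_smul, mul_comm c] using this

theorem scalarE_eq_zero {φ : A →ₗ[ℂ] ℂ} (h1 : φ 1 = 1) {x : A} (hx : scalarE φ x = 0) :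
    φ x = 0 := by
  have := congrArg φ hx
  simpa [scalarE, Algebra.algebraMap_eq_smul_one, h1] using this

theorem scalar_Pset_subset {F : StarSubalgebra ℂ A} {φ : A →ₗ[ℂ] ℂ} (h1 : φ 1 = 1) {a : A}
    (i j : Fin 2) : Pset (scalarD A) (scalarE φ) a i j ⊆ Qset φ F a i j := by
  intro x hx
  fin_cases i <;> fin_cases j
  · have hx' : x ∈ Submodule.span ℂ
      (⋃ m : ℕ, wordSet (scalarD A) a (altList false (2 * m + 1))) := hx
    refine (Submodule.span_le.2 (Set.iUnion_subset fun m => ?_) :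
      _ ≤ Q00 φ F a) hx'
    rintro _ ⟨_, ⟨c, rfl⟩, w, hw, rfl⟩
    have := Submodule.smul_mem _ c (Submodule.mul_mem_mul
      (Submodule.mem_span_singleton_self (R := ℂ) (star a))
      ((le_sup_left : T a ≤ T a ⊔ T a * U φ F a * T0 φ a) (scalar_even_mem_T a m hw)))
    simpa [Q00, letter, Algebra.algebraMap_eq_smul_one, mul_assoc] using this
  · obtain ⟨hx1, hx2⟩ := (hx : x ∈ Submodule.span ℂ
      (⋃ m : ℕ, wordSet (scalarD A) a (altList false (2 * m))) ∧ scalarE φ x = 0)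
    refine ⟨Submodule.span_mono (Set.iUnion_mono fun m => wordSet_mono ?_ a _) hx1,
      scalarE_eq_zero h1 hx2⟩
    rintro _ ⟨c, rfl⟩
    exact F.toSubalgebra.algebraMap_mem c
  · obtain ⟨hx1, hx2⟩ := (hx : x ∈ Submodule.span ℂ
      (⋃ m : ℕ, wordSet (scalarD A) a (altList true (2 * m))) ∧ scalarE φ x = 0)
    refine (le_sup_left : T0 φ a ≤ Q10 φ F a) (mem_T0.2 ⟨?_, scalarE_eq_zero h1 hx2⟩)
    exact Submodule.span_le.2 (Set.iUnion_subset fun m => scalar_even_mem_T a m) hx1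
  · have hx' : x ∈ Submodule.span ℂ
      (⋃ m : ℕ, wordSet (scalarD A) a (altList true (2 * m + 1))) := hx
    have h : T a * Submodule.span ℂ {a} ≤ Q11 φ F a := by
      unfold Q11
      gcongr
      exact le_sup_left
    exact h (Submodule.span_le.2 (Set.iUnion_subset fun m => scalar_odd_mem a m) hx')

/-! ### The induction -/

/-- The main induction: `x` is the part of the product already made `E`-centred and `y` the part
still to be treated. The extra factor `h ∈ F` is only allowed if the path of indices starts at
`1` or ends at `0`. -/
theorem phi_chain_eq_zero {F : StarSubalgebra ℂ A} {E : A →ₗ[ℂ] A}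
    (hE : IsCondExp (F : Set A) E) {φ : A →ₗ[ℂ] ℂ} (hφ : IsFaithfulTracialState φ)
    (hcompat : ∀ x : A, φ (E x) = φ x) {a : A} (ha : RDiagWithAmalg (F : Set A) E a)
    (hfree : FreeScalar φ ![({a * star a} : Set A), (F : Set A)]) (N : ℕ) (hN : 0 < N) :
    ∀ (m n : ℕ), n + m = N → ∀ (i j k : Fin 2) (x y : A),
      Ch (fun i j => Qset φ F a i j ∩ Pset (F : Set A) E a i j) n i j x →
      Ch (Qset φ F a) m j k y →
      ∀ h ∈ F, (i = 0 → k = 1 → h = 1) → φ (h * (x * y)) = 0 := by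
  induction N using Nat.strong_induction_on with
  | _ N IH =>
  -- The shorter products are only needed with an empty treated part.
  have IH' : ∀ M < N, 0 < M → ∀ (i k : Fin 2) (y : A), Ch (Qset φ F a) M i k y →
      ∀ h ∈ F, (i = 0 → k = 1 → h = 1) → φ (h * y) = 0 := by
    intro M hM hM0 i k y hy h hh hik
    simpa using IH M hM hM0 M 0 (by simp) i i k 1 y (Ch.nil i) hy h hh hik
  intro m
  induction m with
  | zero =>
    intro n hn i j k x y hx hy h hh _
    obtain ⟨rfl, rfl⟩ := hy.zero_inv
    obtain ⟨idx, w, -, hw, rfl⟩ := hx.exists_ofFn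
    have hz := ha n (by omega) idx w fun q => (hw q).2
    have := hE.2.2 h hh 1 F.one_mem (List.ofFn w).prod
    rw [mul_one, mul_one] at this
    rw [mul_one, ← hcompat, this, hz]
    simp
  | succ m ihm =>
    intro n hn i j k x y hx hy h hh hik
    obtain ⟨j', y₁, y₂, hy₁, hy₂, rfl⟩ := hy.succ_inv
    have shift : ∀ z, z ∈ Qset φ F a j j' → z ∈ Pset (F : Set A) E a j j' →
        φ (h * (x * (z * y₂))) = 0 := by
      intro z hz hz'
      rw [← mul_assoc x]
      exact ihm (n + 1) (by omega) i j' k (x * z) y₂ (hx.append (Ch.single ⟨hz, hz'⟩)) hy₂ h hh hik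
    by_cases hjj : j = 0 ∧ j' = 1
    swap
    · exact shift y₁ hy₁ (Qset_subset_Pset hE hφ hcompat hfree hjj hy₁)
    obtain ⟨rfl, rfl⟩ := hjj
    obtain ⟨hy₁S, hy₁φ⟩ := (hy₁ : y₁ ∈ SW F a false 0 ∧ φ y₁ = 0)
    have hf : E y₁ ∈ F0 φ F := mem_F0.2 ⟨hE.2.1 y₁, by rw [hcompat, hy₁φ]⟩
    have hEE : E (E y₁) = E y₁ := by
      have := hE.2.2 (E y₁) (hE.2.1 y₁) 1 F.one_mem 1
      simpa [hE.1] using this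
    have hc : y₁ - E y₁ ∈ SW F a false 0 := sub_mem hy₁S (mem_SW_of_mem F a false (hE.2.1 y₁))
    have h₁ := shift (y₁ - E y₁) ⟨hc, by simp [hcompat]⟩ ⟨hc, by simp [hEE]⟩
    generalize E y₁ = f at hf h₁
    have hfF := (mem_F0.1 hf).1
    have h₂ : φ (h * (x * (f * y₂))) = 0 := by
      cases n with
      | zero =>
        obtain ⟨rfl, rfl⟩ := hx.zero_inv
        rw [one_mul]
        rcases Nat.eq_zero_or_pos m with rfl | hm
        · obtain ⟨rfl, rfl⟩ := hy₂.zero_inv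
          rw [hik rfl rfl, one_mul, mul_one]
          exact (mem_F0.1 hf).2
        · rw [← mul_assoc]
          exact IH' m (by omega) hm 1 k y₂ hy₂ _ (mul_mem hh hfF) (by simp)
      | succ n =>
        have hxQ : Ch (Qset φ F a) (n + 1) i 0 x := hx.mono fun _ _ => Set.inter_subset_left
        cases m with
        | zero =>
          obtain ⟨rfl, rfl⟩ := hy₂.zero_inv
          rw [mul_one, ← mul_assoc, hφ.tracial, ← mul_assoc]
          exact IH' (n + 1) (by omega) (by omega) i 0 x hxQ _ (mul_mem hfF hh) (by simp)
        | succ m =>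
          obtain ⟨p, x₁, x₂, hx₁, hx₂, rfl⟩ := hxQ.snoc_inv
          obtain ⟨q, y₃, y₄, hy₃, hy₄, rfl⟩ := hy₂.succ_inv
          have := IH' (n + (m + 1)) (by omega) (by omega) i k _
            (hx₁.append (Ch.cons (Qset_merge hφ hfree hx₂ hf hy₃) hy₄)) h hh hik
          simpa only [mul_assoc] using this
    have : h * (x * (y₁ * y₂)) = h * (x * ((y₁ - f) * y₂)) + h * (x * (f * y₂)) := by
      simp only [sub_mul, mul_sub]; abel
    rw [this, map_add, h₁, h₂, add_zero]

end Words

end RDiagAux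

end

/-- If the `F`-valued structure `(F ⊆ A, E)` and the scalar structure
`(A, φ)` are compatible, `a` is `R`-diagonal with amalgamation over `F`, and `{a a*}` and
`F` are free with respect to `φ`, then `a` is `R`-diagonal with respect to `φ`. -/
theorem rDiagonal_of_rDiagonal_with_amalgamation
    {A : Type*} [Ring A] [Algebra ℂ A] [StarRing A] [StarModule ℂ A]
    (F : StarSubalgebra ℂ A) (E : A →ₗ[ℂ] A) (hE : IsCondExp (F : Set A) E)
    (φ : A →ₗ[ℂ] ℂ) (hφ : IsFaithfulTracialState φ)
    (hcompat : ∀ x : A, φ (E x) = φ x)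
    (a : A)
    (ha : RDiagWithAmalg (F : Set A) E a)
    (hfree : FreeScalar φ ![({a * star a} : Set A), (F : Set A)]) :
    RDiag φ a := by
  intro n hn i x hx
  have hch := RDiagAux.Ch.ofFn (Q := RDiagAux.Qset φ F a) n i x fun k =>
    RDiagAux.scalar_Pset_subset hφ.unital _ _ (hx k)
  have := RDiagAux.phi_chain_eq_zero hE hφ hcompat ha hfree n hn n 0 (by simp) _ _ _ _ _
    (RDiagAux.Ch.nil _) hch 1 F.one_mem (fun _ _ => rfl)
  rw [one_mul, one_mul] at this
  simp [scalarE, this]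
end

section
/- Let A ⊆ B(H) be a von Neumann algebra on a complex Hilbert space H and let e₁, …, eₙ ∈ A be orthogonal projections with e₁ + ⋯ + eₙ = 1. If y ∈ A is a positive invertible operator, then there exists x ∈ A with y = x x* and such that x is upper triangular with respect to e₁, …, eₙ, i.e. e_i x e_j = 0 whenever i > j. -/
/-!
This is a block Cholesky factorisation. Conjugating `y` by unipotent upper triangular elements of
`A` clears the off-diagonal blocks one projection at a time, starting from the last one
(`commute_elimination`, `exists_partial_factorization`). This writes `y = x d x*` with `x` upper
triangular and `d` positive, invertible and block diagonal, i.e. commuting with every `eᵢ`. Then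
`√d` is block diagonal as well, and `x √d` is the required square root.

The pivot is the compression `e d e`; it is invertible in its corner because `d` is bounded below
by a positive scalar (`exists_isUnit_corner`). Inverses and square roots stay in `A` by the double
commutant property (`VonNeumannAlgebra.mem_of_forall_commute`).
-/

/-- If `d` is positive and invertible, so that `r ≤ d` for some real `r > 0`, then the compression
of `d` to the projection `e`, padded by `r` on the complement of `e`, is still bounded below by
`r`, hence invertible. -/
lemma exists_isUnit_corner {R : Type*} [CStarAlgebra R] [PartialOrder R] [StarOrderedRing R]
    {d e : R} (hd : 0 ≤ d) (hdu : IsUnit d) (he : IsSelfAdjoint e) (hee : e * e = e) :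
    ∃ r : ℝ, IsUnit (e * d * e + r • (1 - e)) := by
  cases subsingleton_or_nontrivial R
  · exact ⟨0, isUnit_of_subsingleton _⟩
  obtain ⟨r, hr, hrd⟩ := (CFC.exists_pos_algebraMap_le_iff (IsSelfAdjoint.of_nonneg hd)).2
    (fun x hx => (hdu.isStrictlyPositive hd).spectrum_pos hx)
  refine ⟨r, (IsStrictlyPositive.of_le (isStrictlyPositive_algebraMap (A := R) hr) ?_).isUnit⟩
  have h := star_right_conjugate_le_conjugate hrd e
  rw [he.star_eq, Algebra.algebraMap_eq_smul_one, mul_smul_comm, smul_mul_assoc, mul_one, hee] at h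
  calc algebraMap ℝ R r = r • e + r • (1 - e) := by
        rw [← smul_add, add_sub_cancel, Algebra.algebraMap_eq_smul_one]
    _ ≤ e * d * e + r • (1 - e) := by gcongr

/-- One step of block Gaussian elimination: with `h` inverting the compression `e * d * e` on the
corner of `e`, the unipotent `1 - (1 - e) * d * e * h` conjugates `d` to an element with no
off-diagonal entries between `e` and `1 - e`. -/
lemma commute_elimination {R : Type*} [Ring R] [StarRing R] {d e h : R}
    (hd : IsSelfAdjoint d) (he : IsSelfAdjoint e) (hee : e * e = e)
    (heh : e * h = h * e) (hh : h * (e * d * e) = e) :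
    Commute ((1 - (1 - e) * d * e * h) * d * star (1 - (1 - e) * d * e * h)) e := by
  set N := (1 - e) * d * e * h with hN
  set D := (1 - N) * d * star (1 - N) with hD
  have hDsa : IsSelfAdjoint D := hd.conjugate (1 - N)
  have hec : e * (1 - e) = 0 := by rw [mul_sub, mul_one, hee, sub_self]
  have heN : e * N = 0 := by
    rw [hN, ← mul_assoc, ← mul_assoc, ← mul_assoc, hec]; simp
  have hNe : star N * e = 0 := by
    rw [← he.star_eq, ← star_mul, heN, star_zero]
  have hNd : N * d * e = (1 - e) * d * e := by
    calc N * d * e = (1 - e) * d * (e * h) * d * e := by rw [hN]; noncomm_ring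
      _ = (1 - e) * d * (h * e) * d * e := by rw [heh]
      _ = (1 - e) * d * (h * (e * d * e)) := by simp only [mul_assoc]
      _ = (1 - e) * d * e := by rw [hh]
  have hDe : D * e = e * D * e := by
    have h1 : D * e = (1 - N) * d * e := by
      rw [hD, mul_assoc, star_sub, star_one, sub_mul 1 (star N), one_mul, hNe, sub_zero]
    have h2 : D * e = e * d * e := by
      rw [h1, sub_mul, sub_mul, hNd]; noncomm_ring
    rw [mul_assoc e D, h2, ← mul_assoc, ← mul_assoc, hee]
  have h3 := congrArg star hDe
  simp only [star_mul, he.star_eq, hDsa.star_eq] at h3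
  exact hDe.trans ((mul_assoc e D e).trans h3.symm)

namespace VonNeumannAlgebra

variable {H : Type*} [NormedAddCommGroup H] [InnerProductSpace ℂ H] [CompleteSpace H]

/-- By the double commutant property, an operator lies in `A` as soon as it commutes with
everything that a given element of `A` commutes with. -/
lemma mem_of_forall_commute (A : VonNeumannAlgebra H) {a b : H →L[ℂ] H} (ha : a ∈ A)
    (h : ∀ c, Commute a c → Commute b c) : b ∈ A := by
  rw [← A.commutant_commutant, mem_commutant_iff]
  intro c hc
  exact (h c (mem_commutant_iff.1 hc a ha)).eq.symm

lemma smul_mem' (A : VonNeumannAlgebra H) {a : H →L[ℂ] H} (ha : a ∈ A) (r : ℝ) : r • a ∈ A :=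
  A.mem_of_forall_commute ha fun _ hc => hc.smul_left r

end VonNeumannAlgebra

/-- Block `U D U*` factorisation, after eliminating the last `k` blocks: `y = x d x*` where `x` is
upper triangular and `d` is positive, invertible, and commutes with the last `k` projections. -/
lemma exists_partial_factorization
    {H : Type*} [NormedAddCommGroup H] [InnerProductSpace ℂ H] [CompleteSpace H]
    (A : VonNeumannAlgebra H) (n : ℕ)
    (e : Fin n → (H →L[ℂ] H))
    (heA : ∀ i, e i ∈ A)
    (hsa : ∀ i, IsSelfAdjoint (e i))
    (hidem : ∀ i, e i * e i = e i)
    (horth : ∀ i j, i ≠ j → e i * e j = 0)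
    (hsum : (∑ i, e i) = 1)
    (y : H →L[ℂ] H) (hyA : y ∈ A) (hy : 0 ≤ y) (hyinv : IsUnit y) (k : ℕ) (hk : k ≤ n) :
    ∃ x d : H →L[ℂ] H, x ∈ A ∧ d ∈ A ∧ 0 ≤ d ∧ IsUnit d ∧ y = x * d * star x ∧
      (∀ i j : Fin n, j < i → e i * x * e j = 0) ∧
      ∀ i : Fin n, n ≤ i + k → Commute d (e i) := by
  induction k with
  | zero =>
    refine ⟨1, y, one_mem A, hyA, hy, hyinv, by simp, fun i j hij => ?_, fun i hi => ?_⟩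
    · rw [mul_one, horth i j hij.ne']
    · have := i.2
      omega
  | succ k ih =>
    obtain ⟨x, d, hxA, hdA, hd, hdu, hyx, hx, hde⟩ := ih (by omega)
    set m : Fin n := ⟨n - (k + 1), by omega⟩ with hm
    obtain ⟨r, hu⟩ := exists_isUnit_corner hd hdu (hsa m) (hidem m)
    set g := e m * d * e m + r • (1 - e m) with hg
    obtain ⟨u, hug⟩ := hu
    have hgA : g ∈ A := add_mem (mul_mem (mul_mem (heA m) hdA) (heA m))
      (A.smul_mem' (sub_mem (one_mem A) (heA m)) r)
    set h : H →L[ℂ] H := ↑u⁻¹ with hh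
    have hhA : h ∈ A := A.mem_of_forall_commute hgA fun c hc => by
      rw [← hug] at hc
      exact hc.units_inv_left
    have hge : g * e m = e m * d * e m := by
      rw [hg, add_mul, smul_mul_assoc, sub_mul, one_mul, hidem, sub_self, smul_zero, add_zero,
        mul_assoc, hidem]
    have heg : e m * g = e m * d * e m := by
      rw [hg, mul_add, mul_smul_comm, mul_sub, mul_one, hidem, sub_self, smul_zero, add_zero,
        ← mul_assoc, ← mul_assoc, hidem]
    have heh : e m * h = h * e m := by
      have : Commute (u : H →L[ℂ] H) (e m) := by
        rw [hug]; exact hge.trans heg.symm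
      exact this.units_inv_left.eq.symm
    have hhe : h * (e m * d * e m) = e m := by
      rw [← hge, ← mul_assoc, ← hug, hh, Units.inv_mul, one_mul]
    have hcomm := commute_elimination (IsSelfAdjoint.of_nonneg hd) (hsa m) (hidem m) heh hhe
    set N := (1 - e m) * d * e m * h with hN
    have hNA : N ∈ A := mul_mem (mul_mem (mul_mem (sub_mem (one_mem A) (heA m)) hdA) (heA m)) hhA
    have heN : e m * N = 0 := by
      rw [hN, ← mul_assoc, ← mul_assoc, ← mul_assoc, mul_sub, mul_one, hidem]; simp
    have hNe : N * e m = N := by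
      rw [hN, mul_assoc, ← heh, ← mul_assoc, mul_assoc _ (e m) (e m), hidem]
    have hNj : ∀ j, j ≠ m → N * e j = 0 := fun j hj => by
      rw [← hNe, mul_assoc, horth m j hj.symm, mul_zero]
    have hNN : N * N = 0 := by
      calc N * N = N * e m * N := by rw [hNe]
        _ = 0 := by rw [mul_assoc, heN, mul_zero]
    -- Later projections already commute with `d`, so the elimination leaves their rows untouched.
    have hiN : ∀ i, m < i → e i * N = 0 := fun i hi => by
      have hci : Commute d (e i) := hde i (by have : n - (k + 1) < (i : ℕ) := hi; omega)
      have h0 : e i * e m = 0 := horth i m hi.ne'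
      calc e i * N = (e i - e i * e m) * d * e m * h := by
            rw [hN, ← mul_assoc, ← mul_assoc, ← mul_assoc, mul_sub, mul_one]
        _ = e i * d * e m * h := by rw [h0, sub_zero]
        _ = d * (e i * e m) * h := by rw [← hci.eq, mul_assoc d]
        _ = 0 := by rw [h0, mul_zero, zero_mul]
    have h1 : (1 + N) * (1 - N) = 1 := by
      rw [mul_sub, mul_one, add_mul, one_mul, hNN]; abel
    have h2 : (1 - N) * (1 + N) = 1 := by
      rw [mul_add, mul_one, sub_mul, one_mul, hNN]; abel
    have hunit : IsUnit (1 - N) := ⟨⟨1 - N, 1 + N, h2, h1⟩, rfl⟩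
    have h1A : 1 - N ∈ A := sub_mem (one_mem A) hNA
    refine ⟨x * (1 + N), (1 - N) * d * star (1 - N), mul_mem hxA (add_mem (one_mem A) hNA),
      mul_mem (mul_mem h1A hdA) (star_mem h1A), star_right_conjugate_nonneg hd _,
      (hunit.mul hdu).mul hunit.star, ?_, fun i j hij => ?_, fun i hi => ?_⟩
    · have h3 : star (1 - N) * star (1 + N) = 1 := by rw [← star_mul, h1, star_one]
      calc y = x * 1 * d * 1 * star x := by rw [hyx, mul_one, mul_one]
        _ = x * ((1 + N) * (1 - N)) * d * (star (1 - N) * star (1 + N)) * star x := by rw [h1, h3]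
        _ = _ := by rw [star_mul]; simp only [mul_assoc]
    · have hxN : e i * x * N * e j = 0 := by
        rcases eq_or_ne j m with rfl | hjm
        -- Inserting `1 = ∑ l, e l` between `x` and `N`, the terms `l < i` die since `x` is upper
        -- triangular, and the terms `l ≥ i > m` since `N` has no rows there.
        · calc e i * x * N * e m = e i * x * (∑ l, e l) * N * e m := by rw [hsum, mul_one]
            _ = ∑ l, e i * x * e l * N * e m := by simp only [Finset.mul_sum, Finset.sum_mul]
            _ = 0 := Finset.sum_eq_zero fun l _ => by
              rcases lt_or_ge l i with hl | hl
              · rw [hx i l hl]; simp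
              · rw [mul_assoc (e i * x), hiN l (hij.trans_le hl)]; simp
        · rw [mul_assoc, hNj j hjm, mul_zero]
      rw [← mul_assoc, mul_add, mul_one, add_mul, hx i j hij, hxN, add_zero]
    · rcases eq_or_ne i m with rfl | him
      · exact hcomm
      have hmi : m < i := by
        have h5 : (i : ℕ) ≠ n - (k + 1) := fun h => him (Fin.ext h)
        show n - (k + 1) < (i : ℕ)
        omega
      have hci : Commute d (e i) := hde i (by have : n - (k + 1) < (i : ℕ) := hmi; omega)
      have hc : Commute (1 - N) (e i) := by
        have : Commute N (e i) := by rw [commute_iff_eq, hiN i hmi, hNj i him]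
        exact (Commute.one_left _).sub_left this
      have hc' : Commute (star (1 - N)) (e i) := by
        have := hc.star_star
        rwa [(hsa i).star_eq] at this
      exact (hc.mul_left hci).mul_left hc'


/-- (Upper triangular square root.) Let `A` be a von Neumann algebra on a
complex Hilbert space `H` and let `e₁, …, eₙ ∈ A` be orthogonal projections (self-adjoint
idempotents with pairwise orthogonal ranges) summing to `1`. If `y ∈ A` is positive and
invertible, then there is `x ∈ A` with `y = x x*` which is upper triangular with respect to
`e₁, …, eₙ`, i.e. `eᵢ x eⱼ = 0` for `i > j`. -/
theorem upper_triangular_square_root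
    {H : Type*} [NormedAddCommGroup H] [InnerProductSpace ℂ H] [CompleteSpace H]
    (A : VonNeumannAlgebra H) (n : ℕ)
    (e : Fin n → (H →L[ℂ] H))
    (heA : ∀ i, e i ∈ A)
    (hsa : ∀ i, IsSelfAdjoint (e i))
    (hidem : ∀ i, e i * e i = e i)
    (horth : ∀ i j, i ≠ j → e i * e j = 0)
    (hsum : (∑ i, e i) = 1)
    (y : H →L[ℂ] H) (hyA : y ∈ A)
    (hypos : ∃ z : H →L[ℂ] H, y = star z * z)
    (hyinv : IsUnit y) :
    ∃ x : H →L[ℂ] H, x ∈ A ∧ y = x * star x ∧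
      ∀ i j : Fin n, j < i → e i * x * e j = 0 := by
  have hy : 0 ≤ y := by
    obtain ⟨z, rfl⟩ := hypos
    exact star_mul_self_nonneg z
  obtain ⟨x, d, hxA, hdA, hd, -, hyx, hx, hde⟩ :=
    exists_partial_factorization A n e heA hsa hidem horth hsum y hyA hy hyinv n le_rfl
  have hcomm : ∀ c, Commute d c → Commute (CFC.sqrt d) c := fun c hc => hc.cfcₙ_nnreal _
  refine ⟨x * CFC.sqrt d, mul_mem hxA (A.mem_of_forall_commute hdA hcomm), ?_, fun i j hij => ?_⟩
  · rw [star_mul, (IsSelfAdjoint.of_nonneg (CFC.sqrt_nonneg d)).star_eq, hyx]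
    conv_lhs => rw [← CFC.sqrt_mul_sqrt_self d hd]
    simp only [mul_assoc]
  · rw [← mul_assoc, mul_assoc, (hcomm _ (hde j (by omega))).eq, ← mul_assoc, hx i j hij, zero_mul]
end

section
/- Let (D ⊆ A, E) be a D-valued probability space. Every scalar Haar unitary u ∈ A is R-diagonal with amalgamation over D. -/
section Collapse

variable {A : Type*} [Ring A] [Algebra ℂ A] [StarRing A] [StarModule ℂ A]

theorem letter_mul_letter_not {u : A} (hu : star u * u = 1 ∧ u * star u = 1) (b : Bool) :
    letter u b * letter u (!b) = 1 := by
  cases b <;> simp [letter, hu.1, hu.2]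

/-- Moving all entries from `D` to the left, neighbouring letters of an alternating word cancel in
pairs, so that only the parity of its length matters. -/
theorem wordSet_altList_collapse (D : StarSubalgebra ℂ A) {u : A}
    (hcomm : ∀ d ∈ D, ∀ b, d * letter u b = letter u b * d)
    (hu : star u * u = 1 ∧ u * star u = 1) (n : ℕ) :
    ∀ (b : Bool) (x : A), x ∈ wordSet (D : Set A) u (altList b n) →
      ∃ d ∈ D, x = d * (if Even n then 1 else letter u b) := by
  induction n with
  | zero =>
    intro b x hx
    exact ⟨x, hx, by simp⟩
  | succ n ih =>
    rintro b x ⟨d, hd, w, hw, rfl⟩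
    obtain ⟨e, he, rfl⟩ := ih (!b) w hw
    refine ⟨d * e, mul_mem hd he, ?_⟩
    have key (z : A) : d * letter u b * (e * z) = d * e * (letter u b * z) := by
      rw [mul_assoc, ← mul_assoc (letter u b), ← hcomm e he b]
      simp only [mul_assoc]
    rw [key]
    by_cases hn : Even n
    · simp [hn, Nat.even_add_one]
    · simp [hn, Nat.even_add_one, letter_mul_letter_not hu]

theorem span_even_words_subset (D : StarSubalgebra ℂ A) {u : A}
    (hcomm : ∀ d ∈ D, ∀ b, d * letter u b = letter u b * d)
    (hu : star u * u = 1 ∧ u * star u = 1) (b : Bool) {x : A}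
    (hx : x ∈ Submodule.span ℂ (⋃ m : ℕ, wordSet (D : Set A) u (altList b (2 * m)))) :
    x ∈ D := by
  have h : Submodule.span ℂ (⋃ m : ℕ, wordSet (D : Set A) u (altList b (2 * m))) ≤
      Subalgebra.toSubmodule D.toSubalgebra := by
    refine Submodule.span_le.2 (Set.iUnion_subset fun m y hy => ?_)
    obtain ⟨d, hd, rfl⟩ := wordSet_altList_collapse D hcomm hu _ b y hy
    simpa using hd
  exact h hx

theorem span_odd_words_subset (D : StarSubalgebra ℂ A) {u : A}
    (hcomm : ∀ d ∈ D, ∀ b, d * letter u b = letter u b * d)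
    (hu : star u * u = 1 ∧ u * star u = 1) (b : Bool) {x : A}
    (hx : x ∈ Submodule.span ℂ (⋃ m : ℕ, wordSet (D : Set A) u (altList b (2 * m + 1)))) :
    ∃ d ∈ D, x = d * letter u b := by
  have h : Submodule.span ℂ (⋃ m : ℕ, wordSet (D : Set A) u (altList b (2 * m + 1))) ≤
      (Subalgebra.toSubmodule D.toSubalgebra).map (LinearMap.mulRight ℂ (letter u b)) := by
    refine Submodule.span_le.2 (Set.iUnion_subset fun m y hy => ?_)
    obtain ⟨d, hd, rfl⟩ := wordSet_altList_collapse D hcomm hu _ b y hy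
    exact ⟨d, hd, by simp⟩
  obtain ⟨d, hd, rfl⟩ := h hx
  exact ⟨d, hd, rfl⟩

theorem exists_list_prod_eq_mul_pow (D : StarSubalgebra ℂ A) {v : A}
    (hcomm : ∀ d ∈ D, d * v = v * d) (L : List A) (hL : ∀ x ∈ L, ∃ d ∈ D, x = d * v) :
    ∃ d ∈ D, L.prod = d * v ^ L.length := by
  induction L with
  | nil => exact ⟨1, one_mem D, by simp⟩
  | cons x L ih =>
    obtain ⟨d, hd, rfl⟩ := hL x (by simp)
    obtain ⟨e, he, hp⟩ := ih fun y hy => hL y (by simp [hy])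
    refine ⟨d * e, mul_mem hd he, ?_⟩
    rw [List.prod_cons, hp, List.length_cons, pow_succ', mul_assoc, ← mul_assoc v, ← hcomm e he]
    simp only [mul_assoc]

end Collapse

/-- In a `D`-valued probability space, every scalar Haar unitary is
`R`-diagonal with amalgamation over `D`. -/
theorem scalar_haar_unitary_rDiagonal
    {A : Type*} [Ring A] [Algebra ℂ A] [StarRing A] [StarModule ℂ A]
    (D : StarSubalgebra ℂ A) (E : A →ₗ[ℂ] A) (hE : IsCondExp (D : Set A) E)
    (u : A)
    (hscalar : IsScalarRV (D : Set A) E u)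
    (hunitary : star u * u = 1 ∧ u * star u = 1)
    (hhaar : ∀ n : ℕ, 1 ≤ n → E (u ^ n) = 0 ∧ E ((star u) ^ n) = 0) :
    RDiagWithAmalg (D : Set A) E u := by
  obtain ⟨hE1, -, hED⟩ := hE
  have hcomm : ∀ d ∈ D, ∀ b, d * letter u b = letter u b * d := by
    intro d hd b
    cases b
    · simpa [letter] using (hscalar.2.1 d hd).2
    · simpa [letter] using (hscalar.2.1 d hd).1
  have hEmul : ∀ d ∈ D, ∀ x, E (d * x) = d * E x := by
    intro d hd x
    simpa using hED d hd 1 (one_mem D) x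
  -- `E` fixes `D` pointwise, so the centred elements of `D` are zero.
  have hEzero : ∀ d ∈ D, E d = 0 → d = 0 := by
    intro d hd h0
    simpa [hE1, h0] using (hEmul d hd 1).symm
  intro n hn i x hx
  by_cases hconst : ∀ k : Fin n, i k.castSucc = i k.succ
  · have hall : ∀ k, i k = i 0 := fun k =>
      Fin.induction rfl (fun k hk => (hconst k).symm.trans hk) k
    obtain ⟨b, hb⟩ : ∃ b, ∀ k, ∃ d ∈ D, x k = d * letter u b := by
      have hx' : ∀ k, x k ∈ Pset (D : Set A) E u (i 0) (i 0) := fun k => by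
        simpa only [hall] using hx k
      generalize i 0 = j at hx'
      fin_cases j
      · exact ⟨false, fun k => span_odd_words_subset D hcomm hunitary false (hx' k)⟩
      · exact ⟨true, fun k => span_odd_words_subset D hcomm hunitary true (hx' k)⟩
    obtain ⟨d, hd, hp⟩ := exists_list_prod_eq_mul_pow D (fun d hd => hcomm d hd b) (List.ofFn x)
      (by simpa [List.mem_ofFn] using hb)
    rw [hp, hEmul d hd, List.length_ofFn]
    cases b
    · simp [letter, (hhaar n hn).2]
    · simp [letter, (hhaar n hn).1]
  · push Not at hconst
    obtain ⟨k, hk⟩ := hconst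
    have hxk : x k = 0 := by
      have h := hx k
      generalize i k.castSucc = p at h hk
      generalize i k.succ = q at h hk
      fin_cases p <;> fin_cases q
      · exact absurd rfl hk
      · exact hEzero _ (span_even_words_subset D hcomm hunitary false h.1) h.2
      · exact hEzero _ (span_even_words_subset D hcomm hunitary true h.1) h.2
      · exact absurd rfl hk
    rw [List.prod_eq_zero (List.mem_ofFn.2 ⟨k, hxk⟩), map_zero]
end
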